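/- arXiv:1605.07884 — 8 statements merged into one kernel-verified Lean document; each statement's English description precedes it below -/
import Mathlib

section
/- Let Ξ be a nonempty subset of L⁰(ℝ^d,F) that is H-decomposable and closed in probability. Then there exists an H-measurable random closed set X in ℝ^d such that Ξ ∩ L⁰(ℝ^d,H) = L⁰(X,H). Conversely, for any F-measurable random closed set X, the family L⁰(X,F) is F-decomposable and closed in probability. -/
open MeasureTheory Filter Set Topology
open scoped Pointwise ENNReal

noncomputable section

/-- Shorthand for the Euclidean space `ℝ^d`. -/
abbrev Ed (d : ℕ) := EuclideanSpace ℝ (Fin d)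

/-- A set-valued map `Γ : Ω → Set (ℝ^d)` is a random set w.r.t. the σ-algebra `m`
if its graph belongs to the product σ-algebra `m ⊗ B(ℝ^d)`. -/
def GraphMeasurable {Ω : Type*} {d : ℕ} (m : MeasurableSpace Ω)
    (Γ : Ω → Set (Ed d)) : Prop :=
  MeasurableSet[m.prod (inferInstance : MeasurableSpace (Ed d))]
    {p : Ω × Ed d | p.2 ∈ Γ p.1}

/-- The family `L⁰(Γ, m)` of `m`-measurable selections of a set-valued map `Γ`
(measurable maps that belong to `Γ` almost surely). -/
def Sel {Ω : Type*} {d : ℕ} {F : MeasurableSpace Ω} (μ : Measure Ω)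
    (m : MeasurableSpace Ω) (Γ : Ω → Set (Ed d)) : Set (Ω → Ed d) :=
  {ξ | Measurable[m] ξ ∧ ∀ᵐ ω ∂μ, ξ ω ∈ Γ ω}

/-- A family of `H`-measurable maps stable under gluing along `H`-measurable sets contains a
sequence whose pointwise closure almost surely contains every member of the family. -/
theorem exists_seq_forall_ae_mem_closure_range {Ω E : Type*} {H F : MeasurableSpace Ω}
    [TopologicalSpace E] [SecondCountableTopology E] [MeasurableSpace E] [OpensMeasurableSpace E]
    (μ : Measure Ω) [IsFiniteMeasure μ] (hHF : H ≤ F) {M : Set (Ω → E)} (hne : M.Nonempty)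
    (hmeas : ∀ ξ ∈ M, Measurable[H] ξ)
    (hglue : ∀ ξ ∈ M, ∀ η ∈ M, ∀ A : Set Ω, MeasurableSet[H] A →
      ∀ [DecidablePred (· ∈ A)], A.piecewise ξ η ∈ M) :
    ∃ ζ : ℕ → Ω → E, (∀ n, ζ n ∈ M) ∧
      ∀ ξ ∈ M, ∀ᵐ ω ∂μ, ξ ω ∈ closure (range fun n => ζ n ω) := by
  classical
  let S := TopologicalSpace.countableBasis E
  have hS : TopologicalSpace.IsTopologicalBasis S :=
    TopologicalSpace.isBasis_countableBasis E
  have : Countable S := (TopologicalSpace.countable_countableBasis E).to_subtype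
  have hSm (B : S) : MeasurableSet (B : Set E) := (hS.isOpen B.2).measurableSet
  let s : S → ℝ≥0∞ := fun B => ⨆ ξ ∈ M, μ (ξ ⁻¹' B)
  have hs_le (B : S) : s B ≤ μ univ := iSup₂_le fun ξ _ => measure_mono (subset_univ _)
  have hs_top (B : S) : s B ≠ ∞ := ne_top_of_le_ne_top (measure_ne_top μ univ) (hs_le B)
  -- `a B n` nearly maximizes the probability of hitting the basic open set `B`
  have key (B : S) (n : ℕ) : ∃ ξ ∈ M, s B ≤ μ (ξ ⁻¹' B) + ((n : ℝ≥0∞) + 1)⁻¹ := by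
    by_contra! hcon
    obtain ⟨ξ₀, hξ₀⟩ := hne
    have hpos : ((n : ℝ≥0∞) + 1)⁻¹ ≠ 0 := by simp
    have hle : ((n : ℝ≥0∞) + 1)⁻¹ ≤ s B := le_add_self.trans (hcon ξ₀ hξ₀).le
    have hsup : s B ≤ s B - ((n : ℝ≥0∞) + 1)⁻¹ := by
      refine iSup₂_le fun ξ hξ => ?_
      exact ENNReal.le_sub_of_add_le_right (ne_top_of_le_ne_top (hs_top B) hle) (hcon ξ hξ).le
    exact absurd hsup (not_le.2 (ENNReal.sub_lt_self (hs_top B)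
      (fun h0 => hpos (le_zero_iff.1 (h0 ▸ hle))) hpos))
  choose a haM ha using key
  have hhit (ξ : Ω → E) (hξ : ξ ∈ M) (B : S) :
      ∀ᵐ ω ∂μ, ξ ω ∈ (B : Set E) → ∃ n, a B n ω ∈ (B : Set E) := by
    let A : Set Ω := ξ ⁻¹' B ∩ ⋂ n, (a B n ⁻¹' B)ᶜ
    have hA : MeasurableSet[H] A :=
      (hmeas ξ hξ (hSm B)).inter
        (MeasurableSet.iInter fun n => (hmeas _ (haM B n) (hSm B)).compl)
    have hbound (n : ℕ) : μ A ≤ ((n : ℝ≥0∞) + 1)⁻¹ := by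
      have hsub : A ∪ a B n ⁻¹' B ⊆ A.piecewise ξ (a B n) ⁻¹' B := by
        rintro ω (hω | hω)
        · simpa [Set.piecewise, hω] using hω.1
        · have hωA : ω ∉ A := fun h => mem_iInter.1 h.2 n hω
          simpa [Set.piecewise, hωA] using hω
      have hdisj : Disjoint A (a B n ⁻¹' B) :=
        Set.disjoint_left.2 fun ω h h' => mem_iInter.1 h.2 n h'
      have hle : μ A + μ (a B n ⁻¹' B) ≤ s B := by
        rw [← measure_union' hdisj (hHF _ hA)]
        exact (measure_mono hsub).trans
          (le_iSup₂ (f := fun ξ (_ : ξ ∈ M) => μ (ξ ⁻¹' (B : Set E))) _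
            (hglue ξ hξ _ (haM B n) A hA))
      have hle' := hle.trans (ha B n)
      rw [add_comm] at hle'
      exact (ENNReal.add_le_add_iff_left (measure_ne_top μ _)).1 hle'
    have hzero : μ A = 0 := by
      refine le_antisymm (ge_of_tendsto' (ENNReal.tendsto_inv_nat_nhds_zero.comp
        (tendsto_add_atTop_nat 1)) fun n => ?_) zero_le
      simpa using hbound n
    filter_upwards [measure_eq_zero_iff_ae_notMem.1 hzero] with ω hω hωB
    by_contra! hcon
    exact hω ⟨hωB, mem_iInter.2 hcon⟩
  obtain ⟨ξ₀, hξ₀⟩ := hne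
  let b : Option (S × ℕ) → Ω → E := fun o => o.elim ξ₀ fun p => a p.1 p.2
  obtain ⟨e, he⟩ := exists_surjective_nat (Option (S × ℕ))
  refine ⟨fun n => b (e n), fun n => ?_, fun ξ hξ => ?_⟩
  · rcases h : e n with _ | p
    · simpa [b, h] using hξ₀
    · simpa [b, h] using haM p.1 p.2
  · filter_upwards [ae_all_iff.2 (hhit ξ hξ)] with ω hω
    refine hS.mem_closure_iff.2 fun B hB hωB => ?_
    obtain ⟨n, hn⟩ := hω ⟨B, hB⟩ hωB
    obtain ⟨k, hk⟩ := he (some (⟨B, hB⟩, n))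
    exact ⟨_, hn, k, by simp [b, hk]⟩

/-- The pointwise closure of a sequence of measurable maps has a measurable graph. -/
theorem measurableSet_graph_closure_range {Ω E : Type*} [MeasurableSpace Ω] [TopologicalSpace E]
    [SecondCountableTopology E] [MeasurableSpace E] [OpensMeasurableSpace E]
    {ζ : ℕ → Ω → E} (hζ : ∀ n, Measurable (ζ n)) :
    MeasurableSet {p : Ω × E | p.2 ∈ closure (range fun n => ζ n p.1)} := by
  have hS := TopologicalSpace.isBasis_countableBasis E
  have hc := TopologicalSpace.countable_countableBasis E
  have heq : {p : Ω × E | p.2 ∈ closure (range fun n => ζ n p.1)} =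
      ⋂ B ∈ TopologicalSpace.countableBasis E,
        ((Prod.snd ⁻¹' B)ᶜ ∪ ⋃ n, (fun p : Ω × E => ζ n p.1) ⁻¹' B) := by
    ext p
    simp only [mem_ofPred_eq, hS.mem_closure_iff, mem_iInter, mem_union, mem_compl_iff,
      mem_preimage, mem_iUnion, ← imp_iff_not_or]
    refine forall₃_congr fun B _ _ => ?_
    constructor
    · rintro ⟨_, hB, n, rfl⟩
      exact ⟨n, hB⟩
    · rintro ⟨n, hn⟩
      exact ⟨_, hn, n, rfl⟩
  rw [heq]
  refine MeasurableSet.biInter hc fun B hB => ?_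
  have hBm : MeasurableSet B := (hS.isOpen hB).measurableSet
  exact (measurable_snd hBm).compl.union
    (MeasurableSet.iUnion fun n => ((hζ n).comp measurable_fst) hBm)

/-- A measurable map is the pointwise limit, wherever it lies in the closure of a sequence from a
family stable under gluing, of a sequence from that family. -/
theorem exists_seq_tendsto_of_mem_closure_range {Ω E : Type*} [MeasurableSpace Ω]
    [PseudoMetricSpace E] [SecondCountableTopology E] [MeasurableSpace E] [OpensMeasurableSpace E]
    {M : Set (Ω → E)} (hmeas : ∀ ξ ∈ M, Measurable ξ)
    (hglue : ∀ ξ ∈ M, ∀ η ∈ M, ∀ A : Set Ω, MeasurableSet A →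
      ∀ [DecidablePred (· ∈ A)], A.piecewise ξ η ∈ M)
    {ζ : ℕ → Ω → E} (hζ : ∀ n, ζ n ∈ M) {ξ : Ω → E} (hξ : Measurable ξ) :
    ∃ g : ℕ → Ω → E, (∀ n, g n ∈ M) ∧
      ∀ ω, ξ ω ∈ closure (range fun n => ζ n ω) → Tendsto (fun n => g n ω) atTop (𝓝 (ξ ω)) := by
  classical
  -- `g n ω` is the closest point to `ξ ω` among `ζ 0 ω, …, ζ (n - 1) ω`
  let g : ℕ → Ω → E := fun n => Nat.rec (ζ 0)
    (fun k h => {ω | dist (ζ k ω) (ξ ω) < dist (h ω) (ξ ω)}.piecewise (ζ k) h) n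
  have hg_succ (n : ℕ) : g (n + 1) =
      {ω | dist (ζ n ω) (ξ ω) < dist (g n ω) (ξ ω)}.piecewise (ζ n) (g n) := rfl
  have hgM (n : ℕ) : g n ∈ M := by
    induction n with
    | zero => exact hζ 0
    | succ n ih =>
      rw [hg_succ]
      exact hglue _ (hζ n) _ ih _ (measurableSet_lt ((hmeas _ (hζ n)).dist hξ)
        ((hmeas _ ih).dist hξ))
  have hdist (n : ℕ) (ω : Ω) :
      dist (g (n + 1) ω) (ξ ω) = min (dist (ζ n ω) (ξ ω)) (dist (g n ω) (ξ ω)) := by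
    rw [hg_succ]
    by_cases h : dist (ζ n ω) (ξ ω) < dist (g n ω) (ξ ω)
    · simp [Set.piecewise, h, h.le]
    · simp [Set.piecewise, h, not_lt.1 h]
  refine ⟨g, hgM, fun ω hω => Metric.tendsto_atTop.2 fun ε hε => ?_⟩
  have hanti : Antitone fun n => dist (g n ω) (ξ ω) :=
    antitone_nat_of_succ_le fun n => (hdist n ω).trans_le (min_le_right _ _)
  obtain ⟨_, ⟨k, rfl⟩, hk⟩ := Metric.mem_closure_iff.1 hω ε hε
  refine ⟨k + 1, fun n hn => (hanti hn).trans_lt ?_⟩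
  rw [dist_comm] at hk
  exact ((hdist k ω).trans_le (min_le_left _ _)).trans_lt hk

/-- Theorem (representation of decomposable, closed-in-probability families):
a nonempty `H`-decomposable subset of `L⁰(ℝ^d, F)` that is closed in probability satisfies
`Ξ ∩ L⁰(ℝ^d,H) = L⁰(X,H)` for some `H`-measurable random closed set `X`; conversely, the
family of selections of any `F`-measurable random closed set is `F`-decomposable and closed
in probability. -/
theorem stmt_0 {Ω : Type*} {d : ℕ} [F : MeasurableSpace Ω]
    (μ : Measure Ω) [IsProbabilityMeasure μ] [μ.IsComplete]
    (H : MeasurableSpace Ω) (hHF : H ≤ F) :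
    (∀ Ξ : Set (Ω → Ed d), Ξ.Nonempty →
      (∀ ξ ∈ Ξ, Measurable[F] ξ) →
      -- H-decomposability: ξ 1_A + η 1_{Ω ∖ A} ∈ Ξ
      (∀ ξ ∈ Ξ, ∀ η ∈ Ξ, ∀ A : Set Ω, MeasurableSet[H] A →
        A.indicator ξ + Aᶜ.indicator η ∈ Ξ) →
      -- closedness in probability (up to a.s. equality)
      (∀ (f : ℕ → Ω → Ed d) (g : Ω → Ed d), (∀ n, f n ∈ Ξ) → Measurable[F] g →
        TendstoInMeasure μ f atTop g → ∃ g' ∈ Ξ, g' =ᵐ[μ] g) →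
      -- conclusion: there is an H-measurable random closed set X with
      -- Ξ ∩ L⁰(ℝ^d,H) = L⁰(X,H)
      ∃ X : Ω → Set (Ed d), GraphMeasurable H X ∧ (∀ᵐ ω ∂μ, IsClosed (X ω)) ∧
        (∀ ξ ∈ Ξ, Measurable[H] ξ → ξ ∈ Sel μ H X) ∧
        (∀ ξ ∈ Sel μ H X, ∃ ξ' ∈ Ξ, ξ' =ᵐ[μ] ξ))
    ∧
    (∀ X : Ω → Set (Ed d), GraphMeasurable F X → (∀ᵐ ω ∂μ, IsClosed (X ω)) →
      -- L⁰(X,F) is F-decomposable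
      (∀ ξ ∈ Sel μ F X, ∀ η ∈ Sel μ F X, ∀ A : Set Ω, MeasurableSet[F] A →
        A.indicator ξ + Aᶜ.indicator η ∈ Sel μ F X) ∧
      -- and closed in probability
      (∀ (f : ℕ → Ω → Ed d) (g : Ω → Ed d), (∀ n, f n ∈ Sel μ F X) → Measurable[F] g →
        TendstoInMeasure μ f atTop g → g ∈ Sel μ F X)) := by
  classical
  refine ⟨fun Ξ _ hΞm hdec hclosed => ?_, fun X _ hXc => ⟨?_, ?_⟩⟩
  · let M : Set (Ω → Ed d) := {ξ | ξ ∈ Ξ ∧ Measurable[H] ξ}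
    have hM : ∀ ξ ∈ M, Measurable[H] ξ := fun ξ hξ => hξ.2
    have hglue : ∀ ξ ∈ M, ∀ η ∈ M, ∀ A : Set Ω, MeasurableSet[H] A →
        ∀ [DecidablePred (· ∈ A)], A.piecewise ξ η ∈ M := by
      intro ξ hξ η hη A hA _
      refine ⟨?_, Measurable.piecewise hA hξ.2 hη.2⟩
      have h := hdec ξ hξ.1 η hη.1 A hA
      rw [Set.indicator_add_compl_eq_piecewise] at h
      convert h
    rcases M.eq_empty_or_nonempty with hempty | hne
    · refine ⟨fun _ => ∅, by simp [GraphMeasurable], by simp, fun ξ hξ hξH => ?_,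
        fun ξ hξ => ?_⟩
      · exact absurd (show ξ ∈ M from ⟨hξ, hξH⟩) (by simp [hempty])
      · obtain ⟨ω, hω⟩ := hξ.2.exists
        exact absurd hω (Set.notMem_empty _)
    · obtain ⟨ζ, hζM, hζ⟩ := exists_seq_forall_ae_mem_closure_range μ hHF hne hM hglue
      refine ⟨fun ω => closure (range fun n => ζ n ω),
        measurableSet_graph_closure_range fun n => hM _ (hζM n),
        Eventually.of_forall fun _ => isClosed_closure,
        fun ξ hξ hξH => ⟨hξH, hζ ξ ⟨hξ, hξH⟩⟩, fun ξ hξ => ?_⟩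
      obtain ⟨g, hgM, hg⟩ := exists_seq_tendsto_of_mem_closure_range hM hglue hζM hξ.1
      refine hclosed g ξ (fun n => (hgM n).1) (hξ.1.mono hHF le_rfl) ?_
      exact tendstoInMeasure_of_tendsto_ae
        (fun n => (hΞm _ (hgM n).1).aestronglyMeasurable) (hξ.2.mono hg)
  · intro ξ hξ η hη A hA
    rw [Set.indicator_add_compl_eq_piecewise]
    refine ⟨Measurable.piecewise hA hξ.1 hη.1, ?_⟩
    filter_upwards [hξ.2, hη.2] with ω h₁ h₂
    by_cases h : ω ∈ A <;> simpa [Set.piecewise, h]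
  · intro f g hf hg hfg
    refine ⟨hg, ?_⟩
    obtain ⟨ns, -, hns⟩ := hfg.exists_seq_tendsto_ae
    filter_upwards [hXc, ae_all_iff.2 fun n => (hf n).2, hns] with ω hc hmem hlim
    exact hc.mem_of_tendsto hlim (Eventually.of_forall fun n => hmem (ns n))
end
end

section
/- Let ξ_n : Ω → ℝ^d, n ≥ 1, be measurable maps and set X(ω) = cl{ξ_n(ω) : n ≥ 1}, which is a random closed set. Let ξ be a measurable map with ξ(ω) ∈ X(ω) for almost all ω. Then for every ε > 0 there exists a finite F-measurable partition A_1,…,A_n of Ω such that E[ min(‖ξ − Σ_{i=1}^n 1_{A_i} ξ_i‖, 1) ] ≤ ε. -/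
open MeasureTheory Filter Set Topology
open scoped Pointwise ENNReal

noncomputable section

/-- A measurable choice of an index `≤ n` minimising finitely many measurable functions. -/
theorem exists_measurable_argmin_le {Ω : Type*} [MeasurableSpace Ω] {f : ℕ → Ω → ℝ}
    (hf : ∀ k, Measurable (f k)) (n : ℕ) :
    ∃ N : Ω → ℕ, Measurable N ∧ (∀ ω, N ω ≤ n) ∧ ∀ ω, ∀ k ≤ n, f (N ω) ω ≤ f k ω := by
  induction n with
  | zero =>
    refine ⟨fun _ => 0, measurable_const, fun _ => le_rfl, fun ω k hk => ?_⟩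
    rw [Nat.le_zero.mp hk]
  | succ n ih =>
    obtain ⟨N, hN, hle, hmin⟩ := ih
    have hfN : Measurable fun ω => f (N ω) ω :=
      (measurable_from_prod_countable_right (f := fun p : ℕ × Ω => f p.1 p.2) hf).comp
        (hN.prodMk measurable_id)
    refine ⟨fun ω => if f (n + 1) ω < f (N ω) ω then n + 1 else N ω,
      Measurable.ite (measurableSet_lt (hf _) hfN) measurable_const hN, fun ω => ?_,
      fun ω k hk => ?_⟩
    · dsimp only
      have := hle ω
      split_ifs <;> omega
    · dsimp only
      rcases Nat.le_succ_iff.mp hk with hk | rfl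
      · have := hmin ω k hk
        split_ifs with h
        · exact h.le.trans this
        · exact this
      · split_ifs with h
        · exact le_rfl
        · exact not_lt.mp h

/-- If `N ω < n`, gluing `f 0, …, f (n - 1)` along the level sets of `N` gives `f (N ω) ω`. -/
theorem sum_indicator_levelSet {Ω E : Type*} [AddCommMonoid E] (f : ℕ → Ω → E) {n : ℕ}
    {N : Ω → ℕ} {ω : Ω} (h : N ω < n) :
    ∑ i : Fin n, (N ⁻¹' {i.1}).indicator (f i.1) ω = f (N ω) ω := by
  rw [Finset.sum_eq_single_of_mem (⟨N ω, h⟩ : Fin n) (Finset.mem_univ _)]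
  · exact indicator_of_mem (mem_preimage.mpr (mem_singleton _)) (f (N ω))
  · intro i _ hi
    have hne : ω ∉ N ⁻¹' {i.1} := fun hω => hi (Fin.ext (Eq.symm hω))
    exact indicator_of_notMem hne (f i.1)

/-- Minimising the distance to `f 0, …, f n` over measurable indices `N n` makes the truncated
expected distance tend to `0`, for a measurable selection `g` of the closure of the `f k`. -/
theorem exists_measurable_index_tendsto_integral {Ω E : Type*} [MeasurableSpace Ω]
    [NormedAddCommGroup E] [MeasurableSpace E] [BorelSpace E] [SecondCountableTopology E]
    (μ : Measure Ω) [IsFiniteMeasure μ] {f : ℕ → Ω → E} (hf : ∀ n, Measurable (f n))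
    {g : Ω → E} (hg : Measurable g)
    (hmem : ∀ᵐ ω ∂μ, g ω ∈ closure (Set.range fun n => f n ω)) :
    ∃ N : ℕ → Ω → ℕ, (∀ n, Measurable (N n)) ∧ (∀ n ω, N n ω ≤ n) ∧
      Tendsto (fun n => ∫ ω, min ‖g ω - f (N n ω) ω‖ 1 ∂μ) atTop (𝓝 0) := by
  have hdist : ∀ k, Measurable fun ω => ‖g ω - f k ω‖ := fun k => (hg.sub (hf k)).norm
  choose N hN hle hmin using
    exists_measurable_argmin_le (f := fun k ω => ‖g ω - f k ω‖) hdist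
  have hdistN : ∀ n, Measurable fun ω => ‖g ω - f (N n ω) ω‖ := fun n =>
    (measurable_from_prod_countable_right
      (f := fun p : ℕ × Ω => ‖g p.2 - f p.1 p.2‖) hdist).comp ((hN n).prodMk measurable_id)
  refine ⟨N, hN, hle, ?_⟩
  rw [← integral_zero Ω ℝ (μ := μ)]
  refine tendsto_integral_of_dominated_convergence (fun _ => 1)
    (fun n => ((hdistN n).min measurable_const).aestronglyMeasurable)
    (integrable_const _) (fun n => ae_of_all _ fun ω => ?_) ?_
  · rw [Real.norm_of_nonneg (by positivity)]
    exact min_le_right _ _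
  · filter_upwards [hmem] with ω hω
    refine Metric.tendsto_atTop.mpr fun δ hδ => ?_
    obtain ⟨_, ⟨k, rfl⟩, hk⟩ := Metric.mem_closure_iff.mp hω δ hδ
    refine ⟨k, fun n hn => ?_⟩
    rw [dist_zero_right, Real.norm_of_nonneg (by positivity)]
    rw [dist_eq_norm] at hk
    exact (min_le_left _ _).trans_lt ((hmin n ω k hn).trans_lt hk)

/-- Lemma (approximation by a finite measurable gluing of a countable family):
if `X(ω) = cl{ξ_n(ω) : n ≥ 1}` and `ξ` is a measurable a.s. selection of `X`, then for every
`ε > 0` there is a finite measurable partition `A_1, …, A_n` of `Ω` with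
`E[‖ξ - Σ_i 1_{A_i} ξ_i‖ ∧ 1] ≤ ε`. -/
theorem stmt_1 {Ω : Type*} {d : ℕ} [F : MeasurableSpace Ω]
    (μ : Measure Ω) [IsProbabilityMeasure μ] [μ.IsComplete]
    (ξseq : ℕ → Ω → Ed d) (hseq : ∀ n, Measurable (ξseq n))
    (ξ : Ω → Ed d) (hξ : Measurable ξ)
    (hmem : ∀ᵐ ω ∂μ, ξ ω ∈ closure (Set.range fun n => ξseq n ω))
    (ε : ℝ) (hε : 0 < ε) :
    ∃ (n : ℕ) (A : Fin n → Set Ω),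
      (∀ i, MeasurableSet (A i)) ∧
      (Pairwise fun i j => Disjoint (A i) (A j)) ∧
      (⋃ i, A i) = Set.univ ∧
      ∫ ω, min ‖ξ ω - ∑ i : Fin n, (A i).indicator (ξseq i.1) ω‖ 1 ∂μ ≤ ε := by
  obtain ⟨N, hN, hle, hlim⟩ := exists_measurable_index_tendsto_integral μ hseq hξ hmem
  obtain ⟨n, hn⟩ := (hlim.eventually (ge_mem_nhds hε)).exists
  refine ⟨n + 1, fun i => N n ⁻¹' {i.1}, fun i => hN n (measurableSet_singleton _),
    fun i j hij => ?_, ?_, ?_⟩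
  · exact Disjoint.preimage _ (disjoint_singleton.mpr (Fin.val_ne_of_ne hij))
  · exact eq_univ_of_forall fun ω =>
      mem_iUnion.mpr ⟨⟨N n ω, Nat.lt_succ_of_le (hle n ω)⟩, rfl⟩
  · have hglue : ∀ ω, ∑ i : Fin (n + 1), (N n ⁻¹' {i.1}).indicator (ξseq i.1) ω =
        ξseq (N n ω) ω := fun ω => sum_indicator_levelSet ξseq (Nat.lt_succ_of_le (hle n ω))
    simpa only [hglue] using hn
end
end

section
/- Let Ξ ⊆ L⁰(ℝ^d,F) be infinitely F-decomposable, and let Γ be an F-measurable random set such that Γ(ω) is open and nonempty for almost all ω. Then L⁰(Γ,F) + Ξ = L⁰(Γ,F) + cl₀Ξ, where the sums are Minkowski sums of subsets of L⁰(ℝ^d,F) and cl₀Ξ is the closure of Ξ with respect to convergence in probability. -/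
open MeasureTheory Filter Set Topology
open scoped Pointwise ENNReal

noncomputable section

/-- The closure of `Ξ` in probability. -/
def clProb {Ω : Type*} {d : ℕ} {F : MeasurableSpace Ω} (μ : Measure Ω)
    (Ξ : Set (Ω → Ed d)) : Set (Ω → Ed d) :=
  {g | Measurable g ∧ ∃ f : ℕ → Ω → Ed d, (∀ n, f n ∈ Ξ) ∧ TendstoInMeasure μ f atTop g}

/-- A sequence of measurable sets admits a measurable index function `k` such that every point
of the union belongs to the set with index `k ω`. -/
theorem exists_measurable_index {Ω : Type*} [MeasurableSpace Ω] {B : ℕ → Set Ω}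
    (hB : ∀ n, MeasurableSet (B n)) :
    ∃ k : Ω → ℕ, Measurable k ∧ ∀ ω, (∃ n, ω ∈ B n) → ω ∈ B (k ω) := by
  classical
  have hex : ∀ ω, ∃ n, ω ∈ B n ∪ (⋃ m, B m)ᶜ := by
    intro ω
    by_cases hω : ω ∈ ⋃ m, B m
    · obtain ⟨n, hn⟩ := mem_iUnion.1 hω
      exact ⟨n, Or.inl hn⟩
    · exact ⟨0, Or.inr hω⟩
  refine ⟨fun ω => Nat.find (hex ω),
    measurable_find hex fun n => (hB n).union (MeasurableSet.iUnion hB).compl, fun ω hω => ?_⟩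
  exact (Nat.find_spec (hex ω)).resolve_right fun h => h (mem_iUnion.2 hω)

/-- Proposition: if `Ξ` is infinitely `F`-decomposable and `Γ` is an a.s. open and nonempty
`F`-measurable random set, then `L⁰(Γ,F) + Ξ = L⁰(Γ,F) + cl₀ Ξ` (equality of subsets of
`L⁰`, i.e. up to a.s. equality).  A countable measurable partition `(A_n)` is encoded by its
measurable index function `k : Ω → ℕ` (so that `A_n = {k = n}` and
`Σ_n ξ_n 1_{A_n} = (ω ↦ ξ_{k(ω)}(ω))`). -/
theorem stmt_2 {Ω : Type*} {d : ℕ} [F : MeasurableSpace Ω]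
    (μ : Measure Ω) [IsProbabilityMeasure μ] [μ.IsComplete]
    (Ξ : Set (Ω → Ed d)) (hΞmeas : ∀ ξ ∈ Ξ, Measurable[F] ξ)
    -- infinite F-decomposability
    (hdec : ∀ ξs : ℕ → Ω → Ed d, (∀ n, ξs n ∈ Ξ) → ∀ k : Ω → ℕ, Measurable k →
      (fun ω => ξs (k ω) ω) ∈ Ξ)
    (Γ : Ω → Set (Ed d)) (hΓ : GraphMeasurable F Γ)
    (hΓopen : ∀ᵐ ω ∂μ, IsOpen (Γ ω) ∧ (Γ ω).Nonempty) :
    ∀ h : Ω → Ed d,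
      (∃ γ ∈ Sel μ F Γ, ∃ ξ ∈ Ξ, h =ᵐ[μ] γ + ξ) ↔
      (∃ γ ∈ Sel μ F Γ, ∃ ξ ∈ clProb μ Ξ, h =ᵐ[μ] γ + ξ) := by
  intro h
  constructor
  · rintro ⟨γ, hγ, ξ, hξ, hh⟩
    refine ⟨γ, hγ, ξ, ⟨hΞmeas ξ hξ, fun _ => ξ, fun _ => hξ, ?_⟩, hh⟩
    exact tendstoInMeasure_of_tendsto_ae
      (fun _ => (hΞmeas ξ hξ).aestronglyMeasurable)
      (Eventually.of_forall fun _ => tendsto_const_nhds)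
  · rintro ⟨γ, ⟨hγm, hγ⟩, ξ, ⟨hξm, f, hf, hfξ⟩, hh⟩
    obtain ⟨ns, -, hns⟩ := hfξ.exists_seq_tendsto_ae
    obtain ⟨k, hk, hkΓ⟩ := exists_measurable_index
      (B := fun n => {ω | γ ω + ξ ω - f (ns n) ω ∈ Γ ω})
      (fun n => (measurable_id.prodMk
        ((hγm.add hξm).sub (hΞmeas _ (hf (ns n))))) hΓ)
    have hζ := hdec (fun n => f (ns n)) (fun n => hf (ns n)) k hk
    refine ⟨fun ω => γ ω + ξ ω - f (ns (k ω)) ω,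
      ⟨(hγm.add hξm).sub (hΞmeas _ hζ), ?_⟩, _, hζ, ?_⟩
    · filter_upwards [hγ, hΓopen, hns] with ω hγω hopen hlim
      have hlim' : Tendsto (fun n => γ ω + ξ ω - f (ns n) ω) atTop (𝓝 (γ ω)) := by
        simpa using hlim.const_sub (γ ω + ξ ω)
      obtain ⟨n, hn⟩ := (hlim'.eventually (hopen.1.mem_nhds hγω)).exists
      exact hkΓ ω ⟨n, hn⟩
    · filter_upwards [hh] with ω hω
      simp [hω]
end
end

section
/- Let Γ be an F-measurable random set in ℝ^d. Then the pointwise closure ω ↦ cl Γ(ω) is a random closed set (its graph belongs to F ⊗ B(ℝ^d)), and the set of selections of cl Γ equals the closure in probability of the set of selections of Γ: L⁰(cl Γ, F) = cl₀ L⁰(Γ,F). -/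
open MeasureTheory Filter Set Topology
open scoped Pointwise ENNReal

noncomputable section

/-- A point in the closure of the images of all the sets `{y | ∀ i < k, y i ≤ N i}` is in the range
of the continuous map `g`. -/
theorem iInter_closure_image_subset_range {X : Type*} [TopologicalSpace X]
    [TopologicalSpace.MetrizableSpace X] {g : (ℕ → ℕ) → X} (hg : Continuous g) (N : ℕ → ℕ) :
    ⋂ k, closure (g '' {y | ∀ i < k, y i ≤ N i}) ⊆ range g := by
  let := TopologicalSpace.metrizableSpaceMetric X
  intro x hx
  rw [mem_iInter] at hx
  have key : ∀ k : ℕ, ∃ y : ℕ → ℕ, (∀ i < k, y i ≤ N i) ∧ dist x (g y) < 1 / ((k : ℝ) + 1) := by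
    intro k
    obtain ⟨_, ⟨y, hy, rfl⟩, hd⟩ :=
      Metric.mem_closure_iff.1 (hx k) (1 / ((k : ℝ) + 1)) Nat.one_div_pos_of_nat
    exact ⟨y, hy, hd⟩
  choose y hyN hyd using key
  have hK : IsCompact (Set.pi univ fun i => Set.Iic (N i)) :=
    isCompact_univ_pi fun i => (Set.finite_Iic (N i)).isCompact
  obtain ⟨z, -, φ, hφ, hz⟩ := hK.tendsto_subseq (x := fun k i => min (y k i) (N i))
    fun k i _ => mem_Iic.2 (min_le_right (y k i) (N i))
  have hyz : Tendsto (fun k => y (φ k)) atTop (𝓝 z) := by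
    rw [tendsto_pi_nhds] at hz ⊢
    intro i
    refine (hz i).congr' ?_
    filter_upwards [eventually_gt_atTop i] with k hk
    exact min_eq_left (hyN (φ k) i (hk.trans_le (hφ.id_le k)))
  have hlim : Tendsto (fun k => g (y k)) atTop (𝓝 x) := by
    rw [tendsto_iff_dist_tendsto_zero]
    refine squeeze_zero (fun _ => dist_nonneg) (fun k => ?_)
      (tendsto_one_div_add_atTop_nhds_zero_nat (𝕜 := ℝ))
    rw [dist_comm]
    exact (hyd k).le
  exact ⟨z, tendsto_nhds_unique ((hg.tendsto z).comp hyz) (hlim.comp hφ.tendsto_atTop)⟩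

/-- The range of a continuous map on the Baire space is approximated from inside, in outer measure,
by closed sets. -/
theorem exists_isClosed_subset_range_le_measure {X : Type*} [TopologicalSpace X]
    [TopologicalSpace.MetrizableSpace X] [MeasurableSpace X] [BorelSpace X] (ν : Measure X)
    [IsFiniteMeasure ν] {g : (ℕ → ℕ) → X} (hg : Continuous g) {c : ℝ≥0∞} (hc : c < ν (range g)) :
    ∃ A, IsClosed A ∧ A ⊆ range g ∧ c ≤ ν A := by
  have step : ∀ (T : {T : Set (ℕ → ℕ) // c < ν (g '' T)}) (i : ℕ),
      ∃ m : ℕ, c < ν (g '' (T.1 ∩ {y | y i ≤ m})) := by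
    rintro ⟨T, hT⟩ i
    have hU : g '' T = ⋃ m : ℕ, g '' (T ∩ {y | y i ≤ m}) := by
      rw [← image_iUnion, ← inter_iUnion]
      congr 1
      exact (inter_eq_left.2 fun y _ => mem_iUnion.2 ⟨y i, le_refl (y i)⟩).symm
    have hmono : Monotone fun m : ℕ => g '' (T ∩ {y | y i ≤ m}) := fun a b hab =>
      image_mono (inter_subset_inter_right _ fun y (hy : y i ≤ a) => hy.trans hab)
    rw [hU, hmono.measure_iUnion] at hT
    exact lt_iSup_iff.1 hT
  choose m hm using step
  let T : ℕ → {T : Set (ℕ → ℕ) // c < ν (g '' T)} := fun k =>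
    Nat.rec ⟨univ, by rwa [image_univ]⟩ (fun k T => ⟨T.1 ∩ {y | y k ≤ m T k}, hm T k⟩) k
  have hT : ∀ k, (T k).1 = {y | ∀ i < k, y i ≤ m (T i) i} := by
    intro k
    induction k with
    | zero => ext y; simp [T]
    | succ k ih =>
      have h : (T (k + 1)).1 = (T k).1 ∩ {y | y k ≤ m (T k) k} := rfl
      rw [h, ih]
      ext y
      simp only [mem_inter_iff, mem_ofPred_eq, Nat.lt_succ_iff_lt_or_eq]
      grind
  refine ⟨_, isClosed_iInter fun k => isClosed_closure,
    iInter_closure_image_subset_range hg fun i => m (T i) i, ?_⟩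
  rw [Antitone.measure_iInter]
  · refine le_iInf fun k => ?_
    rw [← hT k]
    exact (T k).2.le.trans (measure_mono subset_closure)
  · exact fun a b hab => closure_mono (image_mono fun y hy i hi => hy i (hi.trans_le hab))
  · exact fun k => isClosed_closure.measurableSet.nullMeasurableSet
  · exact ⟨0, measure_ne_top _ _⟩

/-- Analytic sets are universally measurable. -/
theorem AnalyticSet.nullMeasurableSet {X : Type*} [TopologicalSpace X]
    [TopologicalSpace.MetrizableSpace X] [MeasurableSpace X] [BorelSpace X] {S : Set X}
    (hS : AnalyticSet S) (ν : Measure X) [IsFiniteMeasure ν] : NullMeasurableSet S ν := by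
  rw [AnalyticSet] at hS
  obtain rfl | ⟨g, hg, rfl⟩ := hS
  · exact MeasurableSet.empty.nullMeasurableSet
  obtain h0 | h0 := eq_or_ne (ν (range g)) 0
  · exact NullMeasurableSet.of_null h0
  obtain ⟨c, -, hcS, hc⟩ := exists_seq_strictMono_tendsto' (pos_iff_ne_zero.2 h0)
  choose A hAc hAS hcA using fun n =>
    exists_isClosed_subset_range_le_measure ν hg (hcS n).2
  have hm : MeasurableSet (⋃ n, A n) := .iUnion fun n => (hAc n).measurableSet
  have hle : ν (range g) ≤ ν (⋃ n, A n) :=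
    le_of_tendsto' hc fun n => (hcA n).trans (measure_mono (subset_iUnion A n))
  exact hm.nullMeasurableSet.congr <| ae_eq_of_subset_of_measure_ge (iUnion_subset hAS) hle
    hm.nullMeasurableSet (measure_ne_top _ _)

/-- A set in a product σ-algebra only depends on countably many events of the first factor. -/
theorem MeasurableSet.exists_preimage_prodMap {Ω E : Type*} [MeasurableSpace Ω]
    [MeasurableSpace E] {G : Set (Ω × E)} (hG : MeasurableSet G) :
    ∃ (X : Ω → ℕ → Bool) (H : Set ((ℕ → Bool) × E)), Measurable X ∧ MeasurableSet H ∧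
      G = Prod.map X id ⁻¹' H := by
  induction G, hG using
    MeasurableSpace.induction_on_inter generateFrom_prod.symm isPiSystem_prod with
  | empty => exact ⟨fun _ _ => true, ∅, measurable_const, .empty, rfl⟩
  | basic t ht =>
    classical
    obtain ⟨A, hA, B, hB, rfl⟩ := ht
    refine ⟨fun ω _ => decide (ω ∈ A), {x | x 0 = true} ×ˢ B,
      measurable_pi_lambda _ fun _ => ?_, ?_, ?_⟩
    · exact measurable_to_bool (by simpa [Set.preimage] using hA)
    · exact (measurableSet_eq_fun (measurable_pi_apply 0) measurable_const).prod hB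
    · ext ⟨ω, x⟩
      simp
  | compl t _ ih =>
    obtain ⟨X, H, hX, hH, rfl⟩ := ih
    exact ⟨X, Hᶜ, hX, hH.compl, rfl⟩
  | iUnion t _ _ ih =>
    choose X H hX hH ht using ih
    refine ⟨fun ω k => X k.unpair.1 ω k.unpair.2,
      ⋃ n, (fun p : (ℕ → Bool) × E => (fun j => p.1 (Nat.pair n j), p.2)) ⁻¹' H n,
      measurable_pi_lambda _ fun k => (measurable_pi_apply _).comp (hX _),
      .iUnion fun n => ?_, ?_⟩
    · refine measurableSet_preimage (Measurable.prodMk ?_ measurable_snd) (hH n)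
      exact measurable_pi_lambda _ fun j => (measurable_pi_apply _).comp measurable_fst
    · rw [preimage_iUnion]
      refine iUnion_congr fun n => ?_
      rw [ht n]
      ext ⟨ω, x⟩
      simp

theorem isClosed_setOf_getElem_eq (l : List ℕ) :
    IsClosed {y : ℕ → ℕ | ∀ i (hi : i < l.length), y i = l[i]} := by
  simp only [ofPred_forall]
  exact isClosed_iInter fun i => isClosed_iInter fun _ =>
    isClosed_eq (continuous_apply i) continuous_const

/-- A continuous map `g` on the Baire space admits a right inverse along `X : Ω → Y`, measurable as
soon as the preimages of the images of the basic open sets are. -/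
theorem exists_measurable_rightInverse_range {Ω Y : Type*} [MeasurableSpace Ω] [TopologicalSpace Y]
    [T2Space Y] {g : (ℕ → ℕ) → Y} (hg : Continuous g) (X : Ω → Y)
    (hX : ∀ l : List ℕ, MeasurableSet
      (X ⁻¹' (g '' {y | ∀ i (hi : i < l.length), y i = l[i]}))) :
    ∃ s : Ω → ℕ → ℕ, Measurable s ∧ ∀ ω, X ω ∈ range g → g (s ω) = X ω := by
  classical
  let C : List ℕ → Set (ℕ → ℕ) := fun l => {y | ∀ i (hi : i < l.length), y i = l[i]}
  have hex : ∀ l ω, ∃ m, (∃ k, X ω ∈ g '' C (l ++ [k])) → X ω ∈ g '' C (l ++ [m]) := fun l ω => by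
    by_cases h : ∃ k, X ω ∈ g '' C (l ++ [k])
    · exact h.imp fun _ hm _ => hm
    · exact ⟨0, fun h' => absurd h' h⟩
  obtain ⟨next, hnext, hfind⟩ : ∃ next : Ω → List ℕ → ℕ, (∀ l, Measurable fun ω => next ω l) ∧
      ∀ ω l, (∃ k, X ω ∈ g '' C (l ++ [k])) → X ω ∈ g '' C (l ++ [next ω l]) := by
    refine ⟨fun ω l => Nat.find (hex l ω), fun l => measurable_find (hex l) fun m => ?_,
      fun ω l => Nat.find_spec (hex l ω)⟩
    refine MeasurableSet.imp ?_ (hX (l ++ [m]))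
    rw [ofPred_exists]
    exact .iUnion fun k => hX (l ++ [k])
  let p : ℕ → Ω → List ℕ := fun n ω => Nat.rec [] (fun _ l => l ++ [next ω l]) n
  have hp : ∀ n ω, p (n + 1) ω = p n ω ++ [next ω (p n ω)] := fun _ _ => rfl
  let : MeasurableSpace (List ℕ) := ⊤
  have hpm : ∀ n, Measurable (p n) := by
    intro n
    induction n with
    | zero => exact measurable_const
    | succ n ih =>
      have h : Measurable fun q : Ω × List ℕ => q.2 ++ [next q.1 q.2] :=
        measurable_from_prod_countable_left fun l =>
          (measurable_from_top (f := fun k : ℕ => l ++ [k])).comp (hnext l)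
      exact h.comp (measurable_id.prodMk ih)
  have hlen : ∀ n ω, (p n ω).length = n := by
    intro n ω
    induction n with
    | zero => rfl
    | succ n ih => simp [hp, ih]
  let s : Ω → ℕ → ℕ := fun ω n => next ω (p n ω)
  refine ⟨s, measurable_pi_lambda _ fun n => ?_, fun ω hω => ?_⟩
  · exact (measurable_from_prod_countable_left (f := fun q : Ω × List ℕ => next q.1 q.2)
      hnext).comp (measurable_id.prodMk (hpm n))
  have hps : ∀ n i (hi : i < (p n ω).length), (p n ω)[i] = s ω i := by
    intro n
    induction n with
    | zero => intro i hi; simp [hlen] at hi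
    | succ n ih =>
      intro i hi
      simp only [hp, List.getElem_append]
      split_ifs with h
      · exact ih i h
      · have : i = n := by simp only [hlen] at hi h; omega
        subst this
        simp [s]
  have hmem : ∀ n, X ω ∈ g '' C (p n ω) := by
    intro n
    induction n with
    | zero => simpa [C, p] using hω
    | succ n ih =>
      obtain ⟨y, hy, hyX⟩ := ih
      rw [hp]
      refine hfind ω (p n ω) ⟨y n, y, fun i hi => ?_, hyX⟩
      rw [List.getElem_append]
      split_ifs with h
      · exact hy i h
      · have : i = n := by simp [hlen] at hi h; omega
        subst this
        simp
  choose y hy hyX using hmem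
  have hlim : Tendsto y atTop (𝓝 (s ω)) := by
    refine tendsto_pi_nhds.2 fun i => tendsto_const_nhds.congr' ?_
    filter_upwards [eventually_gt_atTop i] with n hn
    rw [hy n i (by rwa [hlen]), hps]
  exact tendsto_nhds_unique ((hg.tendsto _).comp hlim)
    (tendsto_const_nhds.congr fun n => (hyX n).symm)

/-- Measurable projection and measurable selection over a complete finite measure space. -/
theorem MeasurableSet.measurableSet_proj_and_exists_selection {Ω E : Type*} [MeasurableSpace Ω]
    (μ : Measure Ω) [IsFiniteMeasure μ] [μ.IsComplete] [TopologicalSpace E] [PolishSpace E]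
    [MeasurableSpace E] [BorelSpace E] [Nonempty E] {G : Set (Ω × E)} (hG : MeasurableSet G) :
    MeasurableSet {ω | ∃ x, (ω, x) ∈ G} ∧
      ∃ ξ : Ω → E, Measurable ξ ∧ ∀ ω, (∃ x, (ω, x) ∈ G) → (ω, ξ ω) ∈ G := by
  obtain ⟨X, H, hX, hH, rfl⟩ := hG.exists_preimage_prodMap
  have hXS : ∀ S : Set (ℕ → Bool), AnalyticSet S → MeasurableSet (X ⁻¹' S) := fun S hS =>
    ((AnalyticSet.nullMeasurableSet hS (μ.map X)).preimage
      (hX.quasiMeasurePreserving μ)).measurable_of_complete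
  have : PolishSpace ((ℕ → Bool) × E) := ⟨⟩
  have hHa := hH.analyticSet
  rw [AnalyticSet] at hHa
  obtain rfl | ⟨f, hf, rfl⟩ := hHa
  · simpa using ⟨fun _ => Classical.arbitrary E, measurable_const⟩
  have hproj : ∀ ω, (∃ x, (ω, x) ∈ Prod.map X id ⁻¹' range f) ↔
      X ω ∈ range fun y => (f y).1 := fun ω => by
    constructor
    · rintro ⟨x, y, hy⟩
      exact ⟨y, by simp [hy]⟩
    · rintro ⟨y, hy⟩
      exact ⟨(f y).2, y, Prod.ext hy rfl⟩
  have hg : Continuous fun y => (f y).1 := continuous_fst.comp hf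
  simp only [hproj]
  refine ⟨hXS _ (analyticSet_range_of_polishSpace hg), ?_⟩
  obtain ⟨s, hs, hsX⟩ := exists_measurable_rightInverse_range hg X fun l =>
    hXS _ ((isClosed_setOf_getElem_eq l).analyticSet.image_of_continuous hg)
  exact ⟨fun ω => (f (s ω)).2, measurable_snd.comp (hf.measurable.comp hs),
    fun ω hω => ⟨s ω, Prod.ext (hsX ω hω) rfl⟩⟩

/-- Proposition: for a random set `Γ`, the pointwise closure `ω ↦ cl Γ(ω)` is a random
closed set and `L⁰(cl Γ, F) = cl₀ L⁰(Γ, F)`. -/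
theorem stmt_3 {Ω : Type*} {d : ℕ} [F : MeasurableSpace Ω]
    (μ : Measure Ω) [IsProbabilityMeasure μ] [μ.IsComplete]
    (Γ : Ω → Set (Ed d)) (hΓ : GraphMeasurable F Γ) :
    GraphMeasurable F (fun ω => closure (Γ ω)) ∧
    Sel μ F (fun ω => closure (Γ ω)) = clProb μ (Sel μ F Γ) := by
  have hG : MeasurableSet {p : Ω × Ed d | p.2 ∈ Γ p.1} := hΓ
  refine ⟨?_, Subset.antisymm ?_ ?_⟩
  · have heq : {p : Ω × Ed d | p.2 ∈ closure (Γ p.1)} =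
        ⋂ U ∈ TopologicalSpace.countableBasis (Ed d), {p | p.2 ∈ U →
          ∃ x, (p.1, x) ∈ {p : Ω × Ed d | p.2 ∈ Γ p.1} ∩ Prod.snd ⁻¹' U} := by
      ext ⟨ω, x⟩
      simp only [mem_ofPred_eq, mem_iInter,
        (TopologicalSpace.isBasis_countableBasis (Ed d)).mem_closure_iff]
      refine forall₃_congr fun U _ _ => ?_
      simp only [Set.Nonempty, mem_inter_iff, mem_preimage, mem_ofPred_eq, and_comm]
    change MeasurableSet {p : Ω × Ed d | p.2 ∈ closure (Γ p.1)}
    rw [heq]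
    refine .biInter (TopologicalSpace.countable_countableBasis _) fun U hU => ?_
    have hUm := (TopologicalSpace.isOpen_of_mem_countableBasis hU).measurableSet
    have hP := ((hG.inter (measurable_snd hUm)).measurableSet_proj_and_exists_selection μ).1
    exact (measurable_snd hUm).imp (measurable_fst hP)
  · rintro ξ ⟨hξ, hξΓ⟩
    have hGn (n : ℕ) : MeasurableSet ({p : Ω × Ed d | p.2 ∈ Γ p.1} ∩
        {p | dist (ξ p.1) p.2 < 1 / ((n : ℝ) + 1)}) :=
      hG.inter (measurableSet_lt ((hξ.comp measurable_fst).dist measurable_snd) measurable_const)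
    choose f hf hfG using fun n => ((hGn n).measurableSet_proj_and_exists_selection μ).2
    have hfΓ : ∀ᵐ ω ∂μ, ∀ n, f n ω ∈ Γ ω ∧ dist (ξ ω) (f n ω) < 1 / ((n : ℝ) + 1) := by
      filter_upwards [hξΓ] with ω hω n
      obtain ⟨x, hx⟩ := Metric.mem_closure_iff.1 hω (1 / ((n : ℝ) + 1)) Nat.one_div_pos_of_nat
      exact hfG n ω ⟨x, hx⟩
    refine ⟨hξ, f, fun n => ⟨hf n, hfΓ.mono fun ω h => (h n).1⟩,
      tendstoInMeasure_of_tendsto_ae (fun n => (hf n).aestronglyMeasurable) ?_⟩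
    filter_upwards [hfΓ] with ω hω
    rw [tendsto_iff_dist_tendsto_zero]
    refine squeeze_zero (fun _ => dist_nonneg) (fun n => ?_)
      (tendsto_one_div_add_atTop_nhds_zero_nat (𝕜 := ℝ))
    rw [dist_comm]
    exact (hω n).2.le
  · rintro ξ ⟨hξ, f, hf, hlim⟩
    refine ⟨hξ, ?_⟩
    obtain ⟨φ, -, hφ⟩ := hlim.exists_seq_tendsto_ae
    filter_upwards [hφ, ae_all_iff.2 fun n => (hf n).2] with ω hω hΓω
    exact mem_closure_of_tendsto hω (Eventually.of_forall fun n => hΓω (φ n))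
end
end

section
/- Let X be an integrable random closed set in ℝ^d (i.e. X admits an integrable selection) and H ⊆ F a sub-σ-algebra. Let E(X|H) be the H-measurable random closed set whose integrable H-measurable selections equal the L¹-closure of {E(ξ|H) : ξ ∈ L¹(X,F)}. Then the set of all (not necessarily integrable) H-measurable selections of E(X|H) coincides with the closure in probability of {E(ξ|H) : ξ ∈ L¹(X,F)}. -/
open MeasureTheory Filter Set Topology
open scoped Pointwise ENNReal

noncomputable section

/-- The family `{E(ξ|H) : ξ ∈ L¹(X,F)}` of conditional expectations of the integrable
selections of `X`. -/
def condexpSet {Ω : Type*} {d : ℕ} {F : MeasurableSpace Ω} (μ : Measure Ω)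
    (H : MeasurableSpace Ω) (X : Ω → Set (Ed d)) : Set (Ω → Ed d) :=
  {g | ∃ ξ : Ω → Ed d, Measurable[F] ξ ∧ Integrable ξ μ ∧
    (∀ᵐ ω ∂μ, ξ ω ∈ X ω) ∧ g = μ[ξ|H]}

/-- The closure of a family of random vectors in `L¹`. -/
def cl1 {Ω : Type*} {d : ℕ} {F : MeasurableSpace Ω} (μ : Measure Ω)
    (S : Set (Ω → Ed d)) : Set (Ω → Ed d) :=
  {g | Integrable g μ ∧ ∃ f : ℕ → Ω → Ed d, (∀ n, f n ∈ S) ∧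
    Tendsto (fun n => eLpNorm (f n - g) 1 μ) atTop (𝓝 0)}

/-- The closure of a family of random vectors with respect to convergence in probability. -/
def clInProb {Ω : Type*} {d : ℕ} {F : MeasurableSpace Ω} (μ : Measure Ω)
    (S : Set (Ω → Ed d)) : Set (Ω → Ed d) :=
  {g | ∃ f : ℕ → Ω → Ed d, (∀ n, f n ∈ S) ∧ TendstoInMeasure μ f atTop g}

/-- A conditional expectation of an integrable selection lies in the `L¹`-closure. -/
theorem condexpSet_subset_cl1 {Ω : Type*} {d : ℕ} {F : MeasurableSpace Ω} {μ : Measure Ω}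
    {H : MeasurableSpace Ω} {X : Ω → Set (Ed d)} :
    condexpSet μ H X ⊆ cl1 μ (condexpSet μ H X) := by
  rintro f ⟨ξ, hξ⟩
  refine ⟨hξ.2.2.2 ▸ integrable_condExp, fun _ => f, fun _ => ⟨ξ, hξ⟩, ?_⟩
  simp

/-- The map equal to `η` where `‖η‖ ≤ n` and to `ζ` elsewhere. -/
def truncateWith {Ω E : Type*} [Norm E] (η ζ : Ω → E) (n : ℕ) (ω : Ω) : E :=
  open Classical in if ‖η ω‖ ≤ n then η ω else ζ ω

section truncateWith

variable {Ω E : Type*} {m : MeasurableSpace Ω} [NormedAddCommGroup E] {η ζ : Ω → E}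

theorem measurable_truncateWith [MeasurableSpace E] [OpensMeasurableSpace E]
    (hη : Measurable η) (hζ : Measurable ζ) (n : ℕ) : Measurable (truncateWith η ζ n) :=
  Measurable.ite (measurableSet_le hη.norm measurable_const) hη hζ

theorem integrable_truncateWith [MeasurableSpace E] [BorelSpace E]
    [SecondCountableTopology E] {μ : Measure Ω} [IsFiniteMeasure μ]
    (hη : Measurable η) (hζ : Measurable ζ) (hζi : Integrable ζ μ) (n : ℕ) :
    Integrable (truncateWith η ζ n) μ := by
  refine ((integrable_const (n : ℝ)).add hζi.norm).mono'
    (measurable_truncateWith hη hζ n).aestronglyMeasurable (ae_of_all _ fun ω => ?_)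
  simp only [truncateWith, Pi.add_apply]
  split_ifs with h
  · linarith [norm_nonneg (ζ ω)]
  · linarith [n.cast_nonneg (α := ℝ)]

theorem tendsto_truncateWith (η ζ : Ω → E) (ω : Ω) :
    Tendsto (fun n => truncateWith η ζ n ω) atTop (𝓝 (η ω)) := by
  obtain ⟨N, hN⟩ := exists_nat_ge ‖η ω‖
  refine tendsto_const_nhds.congr' ?_
  filter_upwards [eventually_ge_atTop N] with n hn
  exact (if_pos (hN.trans (Nat.cast_le.2 hn))).symm

end truncateWith

/-- Lemma: the (not necessarily integrable) `H`-measurable selections of the conditional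
expectation `E(X|H)` of an integrable random closed set `X` coincide, up to a.s. equality,
with the closure in probability of `{E(ξ|H) : ξ ∈ L¹(X,F)}`.  Here `Y = E(X|H)` is
characterised by the property that its integrable `H`-measurable selections form the
`L¹`-closure of `{E(ξ|H) : ξ ∈ L¹(X,F)}`. -/
theorem stmt_14 {Ω : Type*} {d : ℕ} [F : MeasurableSpace Ω]
    (μ : Measure Ω) [IsProbabilityMeasure μ] [μ.IsComplete]
    (H : MeasurableSpace Ω) (hHF : H ≤ F)
    (X : Ω → Set (Ed d)) (hX : GraphMeasurable F X)
    (hXcl : ∀ᵐ ω ∂μ, IsClosed (X ω))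
    (hXint : ∃ ξ : Ω → Ed d, Measurable[F] ξ ∧ Integrable ξ μ ∧ ∀ᵐ ω ∂μ, ξ ω ∈ X ω)
    (Y : Ω → Set (Ed d)) (hYgr : GraphMeasurable H Y)
    (hYcl : ∀ᵐ ω ∂μ, IsClosed (Y ω))
    (hY : ∀ η : Ω → Ed d,
      (Measurable[H] η ∧ Integrable η μ ∧ ∀ᵐ ω ∂μ, η ω ∈ Y ω) ↔
        ∃ g ∈ cl1 μ (condexpSet μ H X), η =ᵐ[μ] g) :
    ∀ η : Ω → Ed d,
      (Measurable[H] η ∧ ∀ᵐ ω ∂μ, η ω ∈ Y ω) ↔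
        ∃ g ∈ clInProb μ (condexpSet μ H X), η =ᵐ[μ] g := by
  have selection_of_ae_eq : ∀ f ∈ condexpSet μ H X, ∀ f' : Ω → Ed d, f' =ᵐ[μ] f →
      Measurable[H] f' ∧ Integrable f' μ ∧ ∀ᵐ ω ∂μ, f' ω ∈ Y ω := fun f hf f' hff' =>
    (hY f').2 ⟨f, condexpSet_subset_cl1 hf, hff'⟩
  obtain ⟨ξ, hξm, hξi, hξX⟩ := hXint
  obtain ⟨hζm, hζi, hζY⟩ :=
    selection_of_ae_eq (μ[ξ|H]) ⟨ξ, hξm, hξi, hξX, rfl⟩ _ EventuallyEq.rfl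
  set ζ : Ω → Ed d := μ[ξ|H]
  intro η
  constructor
  · rintro ⟨hηm, hηY⟩
    have approx : ∀ n : ℕ, ∃ f ∈ condexpSet μ H X,
        eLpNorm (f - truncateWith η ζ n) 1 μ < ENNReal.ofReal (1 / ((n : ℝ) + 1)) := by
      intro n
      obtain ⟨g, ⟨-, f, hfS, hf⟩, hg⟩ := (hY (truncateWith η ζ n)).1
        ⟨measurable_truncateWith hηm hζm n,
          integrable_truncateWith (hηm.mono hHF le_rfl) (hζm.mono hHF le_rfl) hζi n, by
            filter_upwards [hηY, hζY] with ω h₁ h₂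
            unfold truncateWith
            split_ifs <;> assumption⟩
      obtain ⟨k, hk⟩ := (hf.eventually_lt_const
        (ENNReal.ofReal_pos.2 (Nat.one_div_pos_of_nat (α := ℝ) (n := n)))).exists
      refine ⟨f k, hfS k, ?_⟩
      rwa [eLpNorm_congr_ae (EventuallyEq.rfl.sub hg)]
    choose f hfS hf using approx
    have hmeas : TendstoInMeasure μ (fun n => f n - truncateWith η ζ n) atTop 0 := by
      refine tendstoInMeasure_of_tendsto_eLpNorm one_ne_zero (fun n => ?_)
        aestronglyMeasurable_const ?_
      · exact (selection_of_ae_eq _ (hfS n) _ EventuallyEq.rfl).2.1.1.sub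
          (measurable_truncateWith (hηm.mono hHF le_rfl)
            (hζm.mono hHF le_rfl) n).aestronglyMeasurable
      · have h0 : Tendsto (fun n : ℕ => ENNReal.ofReal (1 / ((n : ℝ) + 1))) atTop (𝓝 0) := by
          simpa using ENNReal.tendsto_ofReal tendsto_one_div_add_atTop_nhds_zero_nat
        refine tendsto_of_tendsto_of_tendsto_of_le_of_le tendsto_const_nhds h0
          (fun _ => zero_le) (fun n => ?_)
        simpa using (hf n).le
    obtain ⟨ns, hns, hae⟩ := hmeas.exists_seq_tendsto_ae
    refine ⟨η, ⟨fun n => f (ns n), fun n => hfS _, ?_⟩, EventuallyEq.rfl⟩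
    refine tendstoInMeasure_of_tendsto_ae
      (fun n => (selection_of_ae_eq _ (hfS _) _ EventuallyEq.rfl).2.1.1) ?_
    filter_upwards [hae] with ω hω
    simpa using hω.add ((tendsto_truncateWith η ζ ω).comp hns.tendsto_atTop)
  · rintro ⟨g, ⟨f, hfS, hfg⟩, hηg⟩
    obtain ⟨ns, -, hae⟩ := hfg.exists_seq_tendsto_ae
    have hlim : ∀ᵐ ω ∂μ, Tendsto (fun n => f (ns n) ω) atTop (𝓝 (η ω)) := by
      filter_upwards [hae, hηg] with ω h₁ h₂
      rwa [h₂]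
    refine ⟨?_, ?_⟩
    · classical
      let f' : ℕ → Ω → Ed d := fun n ω =>
        if Tendsto (fun n => f (ns n) ω) atTop (𝓝 (η ω)) then f (ns n) ω else η ω
      have hf' : ∀ n, Measurable[H] (f' n) := fun n => by
        refine (selection_of_ae_eq _ (hfS (ns n)) (f' n) ?_).1
        filter_upwards [hlim] with ω hω
        exact if_pos hω
      refine @measurable_of_tendsto_metrizable Ω (Ed d) H _ _ _ _ f' η hf'
        (tendsto_pi_nhds.2 fun ω => ?_)
      by_cases hω : Tendsto (fun n => f (ns n) ω) atTop (𝓝 (η ω))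
      · simpa only [f', if_pos hω] using hω
      · simp only [f', if_neg hω, tendsto_const_nhds]
    · have hfY : ∀ᵐ ω ∂μ, ∀ n, f (ns n) ω ∈ Y ω :=
        ae_all_iff.2 fun n => (selection_of_ae_eq _ (hfS (ns n)) _ EventuallyEq.rfl).2.2
      filter_upwards [hlim, hfY, hYcl] with ω h₁ h₂ h₃
      exact h₃.mem_of_tendsto h₁ (Eventually.of_forall h₂)
end
end

section
/- Let X be a random closed set in ℝ^d with 0 ∈ X(ω) for almost all ω, let H ⊆ F be a sub-σ-algebra, and let Xⁿ(ω) = X(ω) ∩ {x : ‖x‖ ≤ n} for n ≥ 1. Then the closure in probability of {E(ξ|H) : ξ ∈ L¹(X,F)} equals the closure in probability of ∪_{n≥1} {E(ξ|H) : ξ ∈ L¹(Xⁿ,F)}. Equivalently, E(X|H) = cl ∪_{n≥1} E(Xⁿ|H) almost surely. -/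
open MeasureTheory Filter Set Topology
open scoped Pointwise ENNReal

noncomputable section

/-- A sequence that is asymptotically `L¹`-close to one converging in measure converges in measure
to the same limit. -/
theorem TendstoInMeasure.of_tendsto_eLpNorm_one_sub {α E : Type*} {mα : MeasurableSpace α}
    {μ : Measure α} [NormedAddCommGroup E] {f h : ℕ → α → E} {g : α → E}
    (hf : ∀ n, AEStronglyMeasurable (f n) μ) (hh : ∀ n, AEStronglyMeasurable (h n) μ)
    (hfg : TendstoInMeasure μ f atTop g)
    (hhf : Tendsto (fun n => eLpNorm (h n - f n) 1 μ) atTop (𝓝 0)) :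
    TendstoInMeasure μ h atTop g := by
  have hdiff : TendstoInMeasure μ (fun n => h n - f n) atTop (0 : α → E) :=
    tendstoInMeasure_of_tendsto_eLpNorm one_ne_zero (fun n => (hh n).sub (hf n))
      aestronglyMeasurable_zero (by simpa using hhf)
  intro ε hε
  have hε2 : 0 < ε / 2 := ENNReal.half_pos hε.ne'
  have hsum := (hdiff _ hε2).add (hfg _ hε2)
  rw [add_zero] at hsum
  refine tendsto_of_tendsto_of_tendsto_of_le_of_le tendsto_const_nhds hsum
    (fun _ => zero_le) fun n => ?_
  refine (measure_mono fun x hx => ?_).trans (measure_union_le _ _)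
  by_contra hcon
  simp only [mem_union, mem_ofPred_eq, not_or, not_le, Pi.sub_apply, Pi.zero_apply] at hcon hx
  have hsub : edist (h n x - f n x) 0 = edist (h n x) (f n x) := by
    simp [edist_eq_enorm_sub]
  rw [hsub] at hcon
  have hlt := (edist_triangle (h n x) (f n x) (g x)).trans_lt (ENNReal.add_lt_add hcon.1 hcon.2)
  rw [ENNReal.add_halves] at hlt
  exact hx.not_gt hlt

/-- The truncation of a function by zero outside the set where its norm is at most `r`. -/
def normTruncation {α E : Type*} [NormedAddCommGroup E] (f : α → E) (r : ℝ) : α → E :=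
  {x | ‖f x‖ ≤ r}.indicator f

theorem measurable_normTruncation {α E : Type*} {mα : MeasurableSpace α} [NormedAddCommGroup E]
    [MeasurableSpace E] [OpensMeasurableSpace E] {f : α → E} (hf : Measurable f) (r : ℝ) :
    Measurable (normTruncation f r) :=
  hf.indicator (measurableSet_le hf.norm measurable_const)

theorem integrable_normTruncation {α E : Type*} {mα : MeasurableSpace α} {μ : Measure α}
    [NormedAddCommGroup E] [MeasurableSpace E] [OpensMeasurableSpace E] {f : α → E}
    (hfm : Measurable f) (hf : Integrable f μ) (r : ℝ) : Integrable (normTruncation f r) μ :=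
  hf.indicator (measurableSet_le hfm.norm measurable_const)

/-- Truncations of an integrable function converge to it in `L¹`. -/
theorem tendsto_eLpNorm_normTruncation_sub {α E : Type*} {mα : MeasurableSpace α} {μ : Measure α}
    [NormedAddCommGroup E] [MeasurableSpace E] [OpensMeasurableSpace E] {f : α → E}
    (hfm : Measurable f) (hf : Integrable f μ) :
    Tendsto (fun n : ℕ => eLpNorm (normTruncation f ((n : ℝ) + 1) - f) 1 μ) atTop (𝓝 0) := by
  simp_rw [eLpNorm_one_eq_lintegral_enorm]
  rw [← lintegral_zero (μ := μ)]
  refine tendsto_lintegral_of_dominated_convergence' (fun x => ‖f x‖ₑ)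
    (fun n => ((integrable_normTruncation hfm hf _).sub hf).1.enorm) (fun n => ae_of_all _ fun x => ?_)
    hf.2.ne (ae_of_all _ fun x => ?_)
  · by_cases hx : ‖f x‖ ≤ (n : ℝ) + 1 <;> simp [normTruncation, indicator, hx]
  · refine tendsto_const_nhds.congr' ?_
    filter_upwards [eventually_ge_atTop ⌈‖f x‖⌉₊] with n hn
    have hx : ‖f x‖ ≤ (n : ℝ) + 1 := by
      have := Nat.ceil_le.mp hn
      linarith
    simp [normTruncation, indicator, hx]

/-- If `0 ∈ X` almost surely, the conditional expectation of a truncated integrable selection of `X`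
is that of a selection of the truncation of `X`. -/
theorem condExp_normTruncation_mem_condexpSet {Ω : Type*} {d : ℕ} {H F : MeasurableSpace Ω}
    {μ : Measure Ω} {X : Ω → Set (Ed d)}
    (hX0 : ∀ᵐ ω ∂μ, (0 : Ed d) ∈ X ω) {ξ : Ω → Ed d} (hξm : Measurable ξ)
    (hξ : Integrable ξ μ) (hξX : ∀ᵐ ω ∂μ, ξ ω ∈ X ω) {r : ℝ} (hr : 0 ≤ r) :
    μ[normTruncation ξ r|H] ∈ condexpSet μ H (fun ω => X ω ∩ Metric.closedBall 0 r) := by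
  refine ⟨normTruncation ξ r, measurable_normTruncation hξm r, integrable_normTruncation hξm hξ r, ?_, rfl⟩
  filter_upwards [hX0, hξX] with ω h0 hω
  by_cases hx : ‖ξ ω‖ ≤ r <;> simp [normTruncation, indicator, hx, h0, hω, hr]

/-- Lemma: for a random closed set `X` containing `0` a.s. and `Xⁿ = X ∩ {‖x‖ ≤ n}`,
the closure in probability of `{E(ξ|H) : ξ ∈ L¹(X,F)}` equals the closure in probability
of `⋃_{n ≥ 1} {E(ξ|H) : ξ ∈ L¹(Xⁿ,F)}` (equivalently, `E(X|H) = cl ⋃ₙ E(Xⁿ|H)` a.s.). -/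
theorem stmt_15 {Ω : Type*} {d : ℕ} [F : MeasurableSpace Ω]
    (μ : Measure Ω) [IsProbabilityMeasure μ] [μ.IsComplete]
    (H : MeasurableSpace Ω) (hHF : H ≤ F)
    (X : Ω → Set (Ed d)) (hX : GraphMeasurable F X)
    (hXcl : ∀ᵐ ω ∂μ, IsClosed (X ω))
    (hX0 : ∀ᵐ ω ∂μ, (0 : Ed d) ∈ X ω) :
    clInProb μ (condexpSet μ H X)
      = clInProb μ (⋃ n : ℕ,
          condexpSet μ H (fun ω => X ω ∩ Metric.closedBall 0 ((n : ℝ) + 1))) := by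
  apply Subset.antisymm
  · rintro g ⟨f, hf, hfg⟩
    choose ξ hξm hξ hξX hfξ using hf
    have hclose (k : ℕ) : ∃ n : ℕ,
        eLpNorm (normTruncation (ξ k) ((n : ℝ) + 1) - ξ k) 1 μ < ((k : ℝ≥0∞) + 1)⁻¹ :=
      ((tendsto_eLpNorm_normTruncation_sub (hξm k) (hξ k)).eventually_lt_const
        (ENNReal.inv_pos.mpr (by finiteness))).exists
    choose n hn using hclose
    refine ⟨fun k => μ[normTruncation (ξ k) ((n k : ℝ) + 1)|H], fun k => mem_iUnion.mpr ⟨n k,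
      condExp_normTruncation_mem_condexpSet hX0 (hξm k) (hξ k) (hξX k) (by positivity)⟩, ?_⟩
    refine TendstoInMeasure.of_tendsto_eLpNorm_one_sub (fun k => ?_)
      (fun k => integrable_condExp.1) hfg ?_
    · rw [hfξ k]
      exact integrable_condExp.1
    · have hlim : Tendsto (fun k : ℕ => ((k : ℝ≥0∞) + 1)⁻¹) atTop (𝓝 0) := by
        simpa using (tendsto_add_atTop_iff_nat 1).mpr ENNReal.tendsto_inv_nat_nhds_zero
      refine tendsto_of_tendsto_of_tendsto_of_le_of_le tendsto_const_nhds hlim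
        (fun _ => zero_le) fun k => ?_
      have hint := integrable_normTruncation (hξm k) (hξ k) ((n k : ℝ) + 1)
      rw [hfξ k, ← eLpNorm_congr_ae (condExp_sub hint (hξ k) H)]
      exact (eLpNorm_condExp_le_eLpNorm _ le_rfl).trans (hn k).le
  · rintro g ⟨f, hf, hfg⟩
    refine ⟨f, fun k => ?_, hfg⟩
    obtain ⟨n, ξ, hξm, hξ, hξX, hfξ⟩ := mem_iUnion.mp (hf k)
    exact ⟨ξ, hξm, hξ, hξX.mono fun ω h => h.1, hfξ⟩
end
end

section
/- Let X be a random closed set in ℝ^d with X(ω) nonempty and convex for almost all ω, and let H ⊆ F be a sub-σ-algebra such that X admits an integrable H-measurable selection. Then cm(X|H) ⊆ E(X|H) ⊆ CM(X|H) almost surely, where cm(X|H) is the H-core of X, E(X|H) is the conditional expectation of X, and CM(X|H) is the H-conditional convex hull of X. In particular, for every ξ ∈ L¹(X,F), E(ξ|H) ∈ CM(X|H) almost surely. -/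
open MeasureTheory Filter Set Topology
open scoped Pointwise ENNReal

noncomputable section

/-- `C` is the `H`-core (conditional core) of `X`: the largest `H`-measurable random set
contained in `X` almost surely. -/
def IsCore {Ω : Type*} {d : ℕ} {F : MeasurableSpace Ω} (μ : Measure Ω)
    (H : MeasurableSpace Ω) (Γ C : Ω → Set (Ed d)) : Prop :=
  GraphMeasurable H C ∧ (∀ᵐ ω ∂μ, C ω ⊆ Γ ω) ∧
    ∀ Z : Ω → Set (Ed d), GraphMeasurable H Z → (∀ᵐ ω ∂μ, Z ω ⊆ Γ ω) →
      ∀ᵐ ω ∂μ, Z ω ⊆ C ω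

/-- `M` is the `H`-conditional convex hull of `X`: the smallest `H`-measurable random
closed convex set containing `X` almost surely. -/
def IsCondConvexHull {Ω : Type*} {d : ℕ} {F : MeasurableSpace Ω} (μ : Measure Ω)
    (H : MeasurableSpace Ω) (X M : Ω → Set (Ed d)) : Prop :=
  GraphMeasurable H M ∧ (∀ᵐ ω ∂μ, IsClosed (M ω) ∧ Convex ℝ (M ω)) ∧
    (∀ᵐ ω ∂μ, X ω ⊆ M ω) ∧
    ∀ Z : Ω → Set (Ed d), GraphMeasurable H Z →
      (∀ᵐ ω ∂μ, IsClosed (Z ω) ∧ Convex ℝ (Z ω)) → (∀ᵐ ω ∂μ, X ω ⊆ Z ω) →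
      ∀ᵐ ω ∂μ, M ω ⊆ Z ω

theorem Nat.measurableSet_sInf_eq {α : Type*} [MeasurableSpace α] {S : α → Set ℕ}
    (hS : ∀ k, MeasurableSet {a | k ∈ S a}) (n : ℕ) : MeasurableSet {a | sInf (S a) = n} := by
  have key : {a | sInf (S a) = n} =
      ({a | n ∈ S a} ∩ ⋂ m ∈ Iio n, {a | m ∈ S a}ᶜ) ∪ ({_a | n = 0} ∩ ⋂ k, {a | k ∈ S a}ᶜ) := by
    ext a
    simp only [mem_ofPred_eq, mem_union, mem_inter_iff, mem_iInter, mem_compl_iff, mem_Iio]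
    constructor
    · rintro rfl
      rcases (S a).eq_empty_or_nonempty with h | h
      · right; simp [h]
      · exact Or.inl ⟨Nat.sInf_mem h, fun m hm => Nat.notMem_of_lt_sInf hm⟩
    · rintro (⟨h, h'⟩ | ⟨rfl, h⟩)
      · refine le_antisymm (Nat.sInf_le h) (not_lt.1 fun hlt => h' _ hlt (Nat.sInf_mem ⟨n, h⟩))
      · rw [eq_empty_of_forall_notMem h, Nat.sInf_empty]
  rw [key]
  exact ((hS n).inter (MeasurableSet.biInter (to_countable _) fun m _ => (hS m).compl)).union
    ((MeasurableSet.const _).inter (MeasurableSet.iInter fun k => (hS k).compl))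

/-- A continuous map on a compact subset of the Baire space has a Borel right inverse, given by the
lexicographically least preimage. -/
theorem IsCompact.exists_measurable_rightInverse {Z : Type*} [TopologicalSpace Z] [T2Space Z]
    [MeasurableSpace Z] [BorelSpace Z] {K : Set (ℕ → ℕ)} (hK : IsCompact K) {g : (ℕ → ℕ) → Z}
    (hg : Continuous g) :
    ∃ s : Z → ℕ → ℕ, Measurable s ∧ ∀ y ∈ g '' K, s y ∈ K ∧ g (s y) = y := by
  let T : List ℕ → Set Z := fun w => g '' (K ∩ {x | PiNat.res x w.length = w})
  have hT : ∀ w, MeasurableSet (T w) := by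
    intro w
    have hcl : IsClosed {x : ℕ → ℕ | PiNat.res x w.length = w} := by
      by_cases h : ∃ x₀ : ℕ → ℕ, PiNat.res x₀ w.length = w
      · obtain ⟨x₀, h₀⟩ := h
        have : {x : ℕ → ℕ | PiNat.res x w.length = w} = ⋂ i ∈ Iio w.length, {x | x i = x₀ i} := by
          ext x
          simp only [mem_ofPred_eq, mem_iInter, mem_Iio]
          nth_rewrite 2 [← h₀]
          exact PiNat.res_eq_res
        rw [this]
        exact isClosed_biInter fun i _ => isClosed_eq (continuous_apply i) continuous_const
      · have : {x : ℕ → ℕ | PiNat.res x w.length = w} = ∅ :=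
          eq_empty_of_forall_notMem fun x hx => h ⟨x, hx⟩
        rw [this]; exact isClosed_empty
    exact ((hK.inter_right hcl).image hg).isClosed.measurableSet
  let p : Z → ℕ → List ℕ := fun y i =>
    Nat.rec [] (fun _ w => sInf {n | y ∈ T (n :: w)} :: w) i
  let s : Z → ℕ → ℕ := fun y i => sInf {n | y ∈ T (n :: p y i)}
  have hp_succ : ∀ y i, p y (i + 1) = s y i :: p y i := fun _ _ => rfl
  have hps : ∀ y i, PiNat.res (s y) i = p y i := by
    intro y i
    induction i with
    | zero => rfl
    | succ i ih => rw [hp_succ, PiNat.res_succ, ih]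
  have hsInf : ∀ w n, MeasurableSet {y | sInf {n | y ∈ T (n :: w)} = n} := fun w n =>
    Nat.measurableSet_sInf_eq (S := fun y => {n | y ∈ T (n :: w)}) (fun k => hT (k :: w)) n
  have hp_meas : ∀ i w, MeasurableSet {y | p y i = w} := by
    intro i
    induction i with
    | zero => exact fun w => MeasurableSet.const ([] = w)
    | succ i ih =>
      rintro (_ | ⟨n, w⟩)
      · simp [hp_succ]
      · have : {y | p y (i + 1) = n :: w} =
            {y | p y i = w} ∩ {y | sInf {n | y ∈ T (n :: w)} = n} := by
          ext y
          simp only [hp_succ, List.cons.injEq, mem_ofPred_eq, mem_inter_iff, s]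
          constructor
          · rintro ⟨h, rfl⟩; exact ⟨rfl, h⟩
          · rintro ⟨rfl, h⟩; exact ⟨h, rfl⟩
        rw [this]
        exact (ih w).inter (hsInf w n)
  refine ⟨s, ?_, ?_⟩
  · refine measurable_pi_iff.2 fun i => measurable_to_countable' fun n => ?_
    have : (fun y => s y i) ⁻¹' {n} =
        ⋃ w, {y | p y i = w} ∩ {y | sInf {n | y ∈ T (n :: w)} = n} := by
      ext y
      simp [s]
    rw [this]
    exact MeasurableSet.iUnion fun w => (hp_meas i w).inter (hsInf w n)
  · intro y hy
    have hmem : ∀ i, y ∈ T (p y i) := by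
      intro i
      induction i with
      | zero => simpa [T, p] using hy
      | succ i ih =>
        rw [hp_succ]
        obtain ⟨x, ⟨hxK, hx⟩, hxy⟩ := ih
        refine Nat.sInf_mem (s := {n | y ∈ T (n :: p y i)}) ⟨x (p y i).length, x, ⟨hxK, ?_⟩, hxy⟩
        simpa using hx
    have hex : ∀ i, ∃ x ∈ K, g x = y ∧ ∀ j < i, x j = s y j := by
      intro i
      obtain ⟨x, ⟨hxK, hx⟩, hxy⟩ := hmem i
      refine ⟨x, hxK, hxy, ?_⟩
      have hx' : PiNat.res x (p y i).length = p y i := hx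
      rw [← hps, PiNat.res_length] at hx'
      exact fun j hj => PiNat.res_eq_res.1 hx' hj
    choose x hxK hxy hxs using hex
    have hlim : Tendsto x atTop (𝓝 (s y)) := tendsto_pi_nhds.2 fun j =>
      tendsto_const_nhds.congr' <| (eventually_gt_atTop j).mono fun i hi => (hxs i j hi).symm
    refine ⟨hK.isClosed.mem_of_tendsto hlim (Eventually.of_forall hxK), ?_⟩
    refine tendsto_nhds_unique ((hg.tendsto _).comp hlim) ?_
    simp [Function.comp_def, hxy]

/-- A neighbourhood of a compact subset of the Baire space contains all cylinders of some fixed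
length around points of that subset. -/
theorem IsCompact.exists_forall_cylinder_subset {K V : Set (ℕ → ℕ)} (hK : IsCompact K)
    (hV : IsOpen V) (hKV : K ⊆ V) : ∃ m, ∀ x ∈ K, PiNat.cylinder x m ⊆ V := by
  refine hK.elim_directed_cover (fun m => {x | PiNat.cylinder x m ⊆ V}) (fun m => ?_) ?_ ?_
  · refine isOpen_iff_mem_nhds.2 fun x hx => ?_
    filter_upwards [(PiNat.isOpen_cylinder (fun _ => ℕ) x m).mem_nhds (PiNat.self_mem_cylinder x m)]
      with y hy
    have : PiNat.cylinder y m = PiNat.cylinder x m := PiNat.mem_cylinder_iff_eq.1 hy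
    simpa only [mem_ofPred_eq, this] using hx
  · intro x hx
    obtain ⟨_, ⟨y, m, rfl⟩, hxy, hyV⟩ :=
      (PiNat.isTopologicalBasis_cylinders (fun _ => ℕ)).exists_subset_of_mem_open (hKV hx) hV
    refine mem_iUnion.2 ⟨m, ?_⟩
    have : PiNat.cylinder x m = PiNat.cylinder y m := PiNat.mem_cylinder_iff_eq.1 hxy
    simpa only [mem_ofPred_eq, this] using hyV
  · exact Monotone.directed_le fun a b hab x hx => (PiNat.cylinder_anti x hab).trans hx

/-- Capacitability: a continuous image of the Baire space with positive outer measure contains the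
image of a compact set with positive measure. -/
theorem exists_isCompact_measure_image_ne_zero {Z : Type*} [TopologicalSpace Z]
    [MeasurableSpace Z] (ν : Measure Z) [ν.OuterRegular] {g : (ℕ → ℕ) → Z} (hg : Continuous g)
    (h : ν (range g) ≠ 0) : ∃ K : Set (ℕ → ℕ), IsCompact K ∧ ν (g '' K) ≠ 0 := by
  obtain ⟨c, hc0, hc⟩ := exists_between (pos_iff_ne_zero.2 h)
  have step : ∀ (i : ℕ) (S : Set (ℕ → ℕ)), ∃ n : ℕ, c < ν (g '' S) →
      c < ν (g '' (S ∩ {x | x i ≤ n})) := by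
    intro i S
    by_cases hS : c < ν (g '' S)
    swap
    · exact ⟨0, fun h => absurd h hS⟩
    have hU : g '' S = ⋃ n : ℕ, g '' (S ∩ {x | x i ≤ n}) := by
      rw [← image_iUnion, ← inter_iUnion,
        iUnion_eq_univ_iff.2 fun x => ⟨x i, le_refl (x i)⟩, inter_univ]
    have hmono : Monotone fun n : ℕ => g '' (S ∩ {x | x i ≤ n}) := fun a b hab =>
      image_mono (inter_subset_inter_right _ fun x (hx : x i ≤ a) => hx.trans hab)
    rw [hU, hmono.measure_iUnion] at hS
    obtain ⟨n, hn⟩ := lt_iSup_iff.1 hS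
    exact ⟨n, fun _ => hn⟩
  choose N hN using step
  let S : ℕ → Set (ℕ → ℕ) := fun i => Nat.rec univ (fun i S => S ∩ {x | x i ≤ N i S}) i
  have hS : ∀ i, c < ν (g '' S i) := by
    intro i
    induction i with
    | zero => simpa [S, image_univ] using hc
    | succ i ih => exact hN i (S i) ih
  let b : ℕ → ℕ := fun i => N i (S i)
  have hSb : ∀ i, S i ⊆ {x | ∀ j < i, x j ≤ b j} := by
    intro i
    induction i with
    | zero => simp
    | succ i ih =>
      rintro x ⟨hx, hxi⟩ j hj
      rcases Nat.lt_succ_iff_lt_or_eq.1 hj with hj | rfl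
      · exact ih hx j hj
      · exact hxi
  have hK : IsCompact (univ.pi fun i => Iic (b i)) :=
    isCompact_univ_pi fun i => (finite_Iic (b i)).isCompact
  refine ⟨_, hK, fun h0 => ?_⟩
  obtain ⟨U, hKU, hU, hUc⟩ := (g '' univ.pi fun i => Iic (b i)).exists_isOpen_lt_of_lt c
    (h0.trans_lt hc0)
  obtain ⟨m, hm⟩ := hK.exists_forall_cylinder_subset (hU.preimage hg) (image_subset_iff.1 hKU)
  refine (hS m).not_ge ((measure_mono (image_subset_iff.2 fun x hx => ?_)).trans hUc.le)
  refine hm (fun i => min (x i) (b i)) (fun i _ => mem_Iic.2 (min_le_right _ _)) ?_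
  exact PiNat.mem_cylinder_iff.2 fun i hi => (min_eq_left (hSb m hx i hi)).symm

/-- Every set in a product σ-algebra is the pullback of a Borel set along a measurable map from the
first factor to the Cantor space. -/
theorem MeasurableSet.exists_cantor_preimage {α E : Type*} [MeasurableSpace α]
    [MeasurableSpace E] {A : Set (α × E)} (hA : MeasurableSet A) :
    ∃ φ : α → ℕ → Bool, Measurable φ ∧ ∃ A' : Set ((ℕ → Bool) × E), MeasurableSet A' ∧
      A = {q | (φ q.1, q.2) ∈ A'} := by
  classical
  induction A, hA using MeasurableSpace.induction_on_inter generateFrom_prod.symm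
    isPiSystem_prod with
  | empty => exact ⟨fun _ _ => true, measurable_const, ∅, .empty, rfl⟩
  | basic t ht =>
    obtain ⟨u, hu, v, hv, rfl⟩ := ht
    refine ⟨fun a _ => decide (a ∈ u), measurable_pi_iff.2 fun _ => ?_,
      {q | q.1 0 = true ∧ q.2 ∈ v}, ?_, ?_⟩
    · exact measurable_to_bool (by simpa [preimage] using hu)
    · exact (measurableSet_eq_fun (by fun_prop) measurable_const).inter (measurable_snd hv)
    · ext q; simp
  | compl t ht ih =>
    obtain ⟨φ, hφ, A', hA', rfl⟩ := ih
    exact ⟨φ, hφ, A'ᶜ, hA'.compl, rfl⟩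
  | iUnion f hd hf ih =>
    choose φ hφ A' hA' hfA using ih
    refine ⟨fun a k => φ k.unpair.1 a k.unpair.2, ?_,
      ⋃ n, {q | ((fun j => q.1 (Nat.pair n j)), q.2) ∈ A' n}, ?_, ?_⟩
    · exact measurable_pi_iff.2 fun k => (measurable_pi_apply _).comp (hφ _)
    · refine MeasurableSet.iUnion fun n => ?_
      have : Measurable fun q : (ℕ → Bool) × E => ((fun j => q.1 (Nat.pair n j)), q.2) := by
        fun_prop
      exact this (hA' n)
    · ext q
      simp only [mem_iUnion, mem_ofPred_eq, Nat.unpair_pair]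
      refine exists_congr fun n => ?_
      conv_lhs => rw [hfA n]
      rfl

/-- Measurable selection: a product-measurable set whose projection has positive outer measure
admits a measurable section over a measurable set of positive measure. -/
theorem MeasurableSet.exists_measurable_section {α E : Type*} [MeasurableSpace α]
    [TopologicalSpace E] [PolishSpace E] [MeasurableSpace E] [BorelSpace E]
    (μ : Measure α) [IsFiniteMeasure μ] {A : Set (α × E)} (hA : MeasurableSet A)
    (h : μ (Prod.fst '' A) ≠ 0) :
    ∃ (B : Set α) (η : α → E), MeasurableSet B ∧ μ B ≠ 0 ∧ Measurable η ∧
      ∀ a ∈ B, (a, η a) ∈ A := by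
  obtain ⟨φ, hφ, A', hA', rfl⟩ := hA.exists_cantor_preimage
  have hproj : Prod.fst '' {q : α × E | (φ q.1, q.2) ∈ A'} = φ ⁻¹' (Prod.fst '' A') := by
    ext a; simp
  have hν : μ.map φ (Prod.fst '' A') ≠ 0 := fun h0 =>
    h (le_antisymm (hproj ▸ (Measure.le_map_apply hφ.aemeasurable _).trans h0.le) zero_le)
  have : PolishSpace ((ℕ → Bool) × E) := {}
  obtain rfl | ⟨f, hf, rfl⟩ := by
    simpa only [AnalyticSet] using hA'.analyticSet
  · simp at hν
  rw [← range_comp] at hν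
  obtain ⟨K, hK, hK0⟩ := exists_isCompact_measure_image_ne_zero _ (continuous_fst.comp hf) hν
  obtain ⟨s, hs, hsK⟩ := hK.exists_measurable_rightInverse (continuous_fst.comp hf)
  have hB : MeasurableSet ((Prod.fst ∘ f) '' K) :=
    (hK.image (continuous_fst.comp hf)).isClosed.measurableSet
  refine ⟨φ ⁻¹' ((Prod.fst ∘ f) '' K), fun a => (f (s (φ a))).2, hφ hB, ?_, ?_, fun a ha => ?_⟩
  · rwa [← Measure.map_apply hφ hB]
  · exact measurable_snd.comp (hf.measurable.comp (hs.comp hφ))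
  · exact ⟨s (φ a), Prod.ext (hsK _ ha).2 rfl⟩

/-- The conditional expectation of an integrable selection of an `H`-measurable random closed
convex set is again a selection of that set. -/
theorem GraphMeasurable.condExp_mem {Ω : Type*} {d : ℕ} {F : MeasurableSpace Ω}
    {μ : Measure Ω} [IsFiniteMeasure μ] {H : MeasurableSpace Ω} (hHF : H ≤ F)
    {M : Ω → Set (Ed d)} (hM : GraphMeasurable H M)
    (hMc : ∀ᵐ ω ∂μ, IsClosed (M ω) ∧ Convex ℝ (M ω))
    {ξ : Ω → Ed d} (hξ : Measurable[F] ξ) (hξi : Integrable ξ μ) (hξM : ∀ᵐ ω ∂μ, ξ ω ∈ M ω) :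
    ∀ᵐ ω ∂μ, (μ[ξ|H]) ω ∈ M ω := by
  have hid : @Measurable Ω Ω F H id := measurable_id'' hHF
  have hpair : @Measurable Ω (Ω × Ed d) F (H.prod inferInstance) (fun a => (id a, ξ a)) :=
    @Measurable.prodMk Ω F Ω (Ed d) H _ id ξ hid hξ
  have hcond := @ProbabilityTheory.condExp_ae_eq_integral_condDistrib' Ω Ω F μ _ id H (Ed d)
    _ _ _ _ _ _ ξ hid hξi
  rw [MeasurableSpace.comap_id] at hcond
  have hint := @Integrable.condDistrib_ae Ω Ω (Ed d) (Ed d) _ _ _ _ F μ _ id ξ H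
    (fun p => p.2) hid.aemeasurable hξ.aemeasurable
    ((integrable_map_measure (@measurable_snd _ _ H _).aestronglyMeasurable
      hpair.aemeasurable).2 hξi)
  have hae := @ProbabilityTheory.compProd_map_condDistrib Ω Ω (Ed d) _ _ _ F μ _ id ξ H
    hξ.aemeasurable
  have hmem : ∀ᵐ p ∂(@Measure.map _ _ F (H.prod inferInstance) (fun a => (id a, ξ a)) μ),
      p.2 ∈ M p.1 := by
    rw [@ae_map_iff _ _ F (H.prod inferInstance) _ _ hpair.aemeasurable _ hM]
    exact hξM
  rw [← hae] at hmem
  have hmem' := ae_of_ae_map hid.aemeasurable (Measure.ae_ae_of_ae_compProd hmem)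
  filter_upwards [hcond, hint, hmem', hMc] with ω h1 h2 h3 h4
  rw [h1]
  exact h4.2.integral_mem h4.1 h3 h2

/-- If every integrable `H`-measurable function that agrees with `ξ₀` off an `H`-measurable set `B`
and selects from `A` on `B` has `μ B = 0`, then `A` is almost surely empty. -/
theorem GraphMeasurable.ae_eq_empty {Ω : Type*} {d : ℕ} {F : MeasurableSpace Ω}
    {μ : Measure Ω} [IsFiniteMeasure μ] {H : MeasurableSpace Ω} (hHF : H ≤ F)
    {A : Ω → Set (Ed d)} (hA : GraphMeasurable H A) {ξ₀ : Ω → Ed d} (hξ₀ : Measurable[H] ξ₀)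
    (hξ₀i : Integrable ξ₀ μ)
    (h : ∀ (η : Ω → Ed d) (B : Set Ω), Measurable[H] η → Integrable η μ →
      (∀ ω ∈ B, η ω ∈ A ω) → (∀ ω ∉ B, η ω = ξ₀ ω) → μ B = 0) :
    ∀ᵐ ω ∂μ, A ω = ∅ := by
  classical
  by_contra hne
  have hpos : μ.trim hHF (Prod.fst '' {p : Ω × Ed d | p.2 ∈ A p.1}) ≠ 0 := fun h0 => hne <| by
    refine measure_mono_null (fun ω hω => ?_) (measure_eq_zero_of_trim_eq_zero hHF h0)
    obtain ⟨x, hx⟩ := nonempty_iff_ne_empty.2 (show A ω ≠ ∅ from hω)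
    exact ⟨(ω, x), hx, rfl⟩
  obtain ⟨B, η, hB, hB0, hη, hηA⟩ :=
    @MeasurableSet.exists_measurable_section Ω (Ed d) H _ _ _ _ (μ.trim hHF) _ _ hA hpos
  rw [trim_measurableSet_eq hHF hB] at hB0
  refine hB0 ?_
  have hcover : B = ⋃ n : ℕ, B ∩ {ω | ‖η ω‖ ≤ n} := by
    rw [← inter_iUnion, iUnion_eq_univ_iff (f := fun n : ℕ => {ω | ‖η ω‖ ≤ n}) |>.2
      fun ω => exists_nat_ge ‖η ω‖, inter_univ]
  rw [hcover, measure_iUnion_null_iff]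
  intro n
  have hBn : MeasurableSet[H] (B ∩ {ω | ‖η ω‖ ≤ n}) :=
    hB.inter (hη.norm measurableSet_Iic)
  have hm : Measurable[H] ((B ∩ {ω | ‖η ω‖ ≤ n}).piecewise η ξ₀) :=
    @Measurable.piecewise _ _ _ _ _ H _ _ hBn hη hξ₀
  refine h ((B ∩ {ω | ‖η ω‖ ≤ n}).piecewise η ξ₀) _ hm ?_ ?_ ?_
  · refine Integrable.mono' (g := fun ω => n + ‖ξ₀ ω‖) ((integrable_const _).add hξ₀i.norm)
      (hm.mono hHF le_rfl).aestronglyMeasurable (Eventually.of_forall fun ω => ?_)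
    by_cases hω : ω ∈ B ∩ {ω | ‖η ω‖ ≤ n}
    · rw [piecewise_eq_of_mem _ _ _ hω]
      exact le_add_of_le_of_nonneg hω.2 (norm_nonneg _)
    · rw [piecewise_eq_of_notMem _ _ _ hω]
      exact le_add_of_nonneg_left n.cast_nonneg
  · intro ω hω
    rw [piecewise_eq_of_mem _ _ _ hω]
    exact hηA ω hω.1
  · exact fun ω hω => piecewise_eq_of_notMem _ _ _ hω

theorem GraphMeasurable.diff {Ω : Type*} {d : ℕ} {H : MeasurableSpace Ω} {A B : Ω → Set (Ed d)}
    (hA : GraphMeasurable H A) (hB : GraphMeasurable H B) :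
    GraphMeasurable H fun ω => A ω \ B ω :=
  MeasurableSet.diff hA hB

/-- An integrable `H`-measurable selection of `X` is its own conditional expectation. -/
theorem mem_cl1_condexpSet {Ω : Type*} {d : ℕ} {F : MeasurableSpace Ω} {μ : Measure Ω}
    [IsFiniteMeasure μ] {H : MeasurableSpace Ω} (hHF : H ≤ F) {X : Ω → Set (Ed d)}
    {η : Ω → Ed d} (hη : Measurable[H] η) (hηi : Integrable η μ) (hηX : ∀ᵐ ω ∂μ, η ω ∈ X ω) :
    η ∈ cl1 μ (condexpSet μ H X) := by
  refine ⟨hηi, fun _ => η, fun _ => ⟨η, hη.mono hHF le_rfl, hηi, hηX, ?_⟩, by simp⟩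
  exact (condExp_of_stronglyMeasurable hHF hη.stronglyMeasurable hηi).symm

/-- An almost surely closed random set that contains all members of a family of random vectors
contains the members of its `L¹`-closure. -/
theorem ae_mem_of_mem_cl1 {Ω : Type*} {d : ℕ} {F : MeasurableSpace Ω} {μ : Measure Ω}
    {S : Set (Ω → Ed d)} {M : Ω → Set (Ed d)} (hM : ∀ᵐ ω ∂μ, IsClosed (M ω))
    (hSm : ∀ f ∈ S, AEStronglyMeasurable f μ) (hS : ∀ f ∈ S, ∀ᵐ ω ∂μ, f ω ∈ M ω)
    {g : Ω → Ed d} (hg : g ∈ cl1 μ S) : ∀ᵐ ω ∂μ, g ω ∈ M ω := by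
  obtain ⟨hgi, f, hf, hlim⟩ := hg
  obtain ⟨ns, -, hns⟩ := (tendstoInMeasure_of_tendsto_eLpNorm one_ne_zero
    (fun n => hSm _ (hf n)) hgi.aestronglyMeasurable hlim).exists_seq_tendsto_ae
  filter_upwards [hM, hns, ae_all_iff.2 fun n => hS _ (hf n)] with ω h1 h2 h3
  exact h1.mem_of_tendsto h2 (Eventually.of_forall fun i => h3 (ns i))

/-- Proposition: for an a.s. nonempty random closed convex set `X` admitting an integrable
`H`-measurable selection, `cm(X|H) ⊆ E(X|H) ⊆ CM(X|H)` a.s.; in particular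
`E(ξ|H) ∈ CM(X|H)` a.s. for every `ξ ∈ L¹(X,F)`. -/
theorem stmt_16 {Ω : Type*} {d : ℕ} [F : MeasurableSpace Ω]
    (μ : Measure Ω) [IsProbabilityMeasure μ] [μ.IsComplete]
    (H : MeasurableSpace Ω) (hHF : H ≤ F)
    (X : Ω → Set (Ed d)) (hX : GraphMeasurable F X)
    (hXp : ∀ᵐ ω ∂μ, IsClosed (X ω) ∧ Convex ℝ (X ω) ∧ (X ω).Nonempty)
    (hXsel : ∃ ξ : Ω → Ed d, Measurable[H] ξ ∧ Integrable ξ μ ∧ ∀ᵐ ω ∂μ, ξ ω ∈ X ω)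
    (C : Ω → Set (Ed d)) (hC : IsCore μ H X C)
    (M : Ω → Set (Ed d)) (hM : IsCondConvexHull μ H X M)
    -- Y is the conditional expectation E(X|H)
    (Y : Ω → Set (Ed d)) (hYgr : GraphMeasurable H Y)
    (hYcl : ∀ᵐ ω ∂μ, IsClosed (Y ω))
    (hY : ∀ η : Ω → Ed d,
      (Measurable[H] η ∧ Integrable η μ ∧ ∀ᵐ ω ∂μ, η ω ∈ Y ω) ↔
        ∃ g ∈ cl1 μ (condexpSet μ H X), η =ᵐ[μ] g) :
    (∀ᵐ ω ∂μ, C ω ⊆ Y ω ∧ Y ω ⊆ M ω) ∧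
    (∀ ξ : Ω → Ed d, Measurable[F] ξ → Integrable ξ μ → (∀ᵐ ω ∂μ, ξ ω ∈ X ω) →
      ∀ᵐ ω ∂μ, (μ[ξ|H]) ω ∈ M ω) := by
  obtain ⟨hCgr, hCX, -⟩ := hC
  obtain ⟨hMgr, hMc, hXM, -⟩ := hM
  obtain ⟨ξ₀, hξ₀, hξ₀i, hξ₀X⟩ := hXsel
  have hcond : ∀ ξ : Ω → Ed d, Measurable[F] ξ → Integrable ξ μ → (∀ᵐ ω ∂μ, ξ ω ∈ X ω) →
      ∀ᵐ ω ∂μ, (μ[ξ|H]) ω ∈ M ω := fun ξ hξ hξi hξX =>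
    hMgr.condExp_mem hHF hMc hξ hξi (by filter_upwards [hξX, hXM] with ω h1 h2 using h2 h1)
  have hselY : ∀ η : Ω → Ed d, Measurable[H] η → Integrable η μ → (∀ᵐ ω ∂μ, η ω ∈ X ω) →
      ∀ᵐ ω ∂μ, η ω ∈ Y ω := fun η hη hηi hηX =>
    ((hY η).2 ⟨η, mem_cl1_condexpSet hHF hη hηi hηX, ae_eq_rfl⟩).2.2
  have hYsel : ∀ η : Ω → Ed d, Measurable[H] η → Integrable η μ → (∀ᵐ ω ∂μ, η ω ∈ Y ω) →
      ∀ᵐ ω ∂μ, η ω ∈ M ω := by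
    intro η hη hηi hηY
    obtain ⟨g, hg, hηg⟩ := (hY η).1 ⟨hη, hηi, hηY⟩
    have hgM : ∀ᵐ ω ∂μ, g ω ∈ M ω := by
      refine ae_mem_of_mem_cl1 (hMc.mono fun ω h => h.1) ?_ ?_ hg
      · rintro f ⟨ξ, -, -, -, rfl⟩
        exact integrable_condExp.aestronglyMeasurable
      · rintro f ⟨ξ, hξ, hξi, hξX, rfl⟩
        exact hcond ξ hξ hξi hξX
    filter_upwards [hηg, hgM] with ω h1 h2
    rwa [h1]
  have hCY : ∀ᵐ ω ∂μ, C ω \ Y ω = ∅ := by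
    refine (hCgr.diff hYgr).ae_eq_empty hHF hξ₀ hξ₀i fun η B hη hηi hηB hηξ => ?_
    refine measure_mono_null (fun ω hω => (hηB ω hω).2) (hselY η hη hηi ?_)
    filter_upwards [hCX, hξ₀X] with ω h1 h2
    by_cases hω : ω ∈ B
    · exact h1 (hηB ω hω).1
    · rwa [hηξ ω hω]
  have hYM : ∀ᵐ ω ∂μ, Y ω \ M ω = ∅ := by
    refine (hYgr.diff hMgr).ae_eq_empty hHF hξ₀ hξ₀i fun η B hη hηi hηB hηξ => ?_
    refine measure_mono_null (fun ω hω => (hηB ω hω).2) (hYsel η hη hηi ?_)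
    filter_upwards [hselY ξ₀ hξ₀ hξ₀i hξ₀X] with ω h2
    by_cases hω : ω ∈ B
    · exact (hηB ω hω).1
    · rwa [hηξ ω hω]
  refine ⟨?_, hcond⟩
  filter_upwards [hCY, hYM] with ω h1 h2
  exact ⟨sdiff_eq_empty.1 h1, sdiff_eq_empty.1 h2⟩
end
end

section
/- Let Ξ be a nonempty family of real-valued F-measurable random variables and H ⊆ F a sub-σ-algebra. Then there exists an H-measurable random variable ξ̂ with values in (−∞,+∞], unique up to a.s. equality, such that (i) ξ̂ ≥ ξ a.s. for all ξ ∈ Ξ, and (ii) every H-measurable random variable η with values in (−∞,+∞] satisfying η ≥ ξ a.s. for all ξ ∈ Ξ also satisfies η ≥ ξ̂ a.s. (ξ̂ is called the H-conditional essential supremum of Ξ). -/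
open MeasureTheory Filter Set Topology

noncomputable section

/-- `s` is the `H`-conditional essential supremum of the family `Ξ` of real random
variables: an `H`-measurable `(-∞,∞]`-valued random variable dominating every `ξ ∈ Ξ`
a.s. and a.s. dominated by every `H`-measurable `(-∞,∞]`-valued random variable that
dominates every `ξ ∈ Ξ` a.s. -/
def IsCondEssSup {Ω : Type*} {F : MeasurableSpace Ω} (μ : Measure Ω)
    (H : MeasurableSpace Ω) (Ξ : Set (Ω → ℝ)) (s : Ω → EReal) : Prop :=
  Measurable[H] s ∧ (∀ᵐ ω ∂μ, s ω ≠ ⊥) ∧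
    (∀ ξ ∈ Ξ, ∀ᵐ ω ∂μ, (ξ ω : EReal) ≤ s ω) ∧
    ∀ η : Ω → EReal, Measurable[H] η → (∀ᵐ ω ∂μ, η ω ≠ ⊥) →
      (∀ ξ ∈ Ξ, ∀ᵐ ω ∂μ, (ξ ω : EReal) ≤ η ω) → ∀ᵐ ω ∂μ, s ω ≤ η ω

/-- A strictly antitone, measurable compression of `EReal` into `[0, 1]`. -/
def invOneAddExp (x : EReal) : ENNReal := (1 + EReal.exp x)⁻¹

lemma strictAnti_invOneAddExp : StrictAnti invOneAddExp := fun _ _ hxy =>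
  ENNReal.inv_lt_inv.2
    (ENNReal.add_lt_add_left ENNReal.one_ne_top (EReal.exp_strictMono hxy))

lemma measurable_invOneAddExp : Measurable invOneAddExp :=
  (measurable_const.add EReal.measurable_exp).inv

lemma invOneAddExp_le_one (x : EReal) : invOneAddExp x ≤ 1 :=
  ENNReal.inv_le_one.2 le_self_add

/-- A nonempty set of measurable functions that is closed under binary and countable infima
has an a.e. least element. -/
lemma exists_ae_least_of_iInf_mem {Ω : Type*} {F : MeasurableSpace Ω} (μ : Measure Ω)
    [IsFiniteMeasure μ] {S : Set (Ω → EReal)} (hne : S.Nonempty)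
    (hmeas : ∀ f ∈ S, Measurable f) (hinf : ∀ f ∈ S, ∀ g ∈ S, f ⊓ g ∈ S)
    (hiInf : ∀ f : ℕ → Ω → EReal, (∀ n, f n ∈ S) → (⨅ n, f n) ∈ S) :
    ∃ s ∈ S, ∀ f ∈ S, s ≤ᵐ[μ] f := by
  let I : (Ω → EReal) → ENNReal := fun f => ∫⁻ ω, invOneAddExp (f ω) ∂μ
  obtain ⟨u, -, hu, huS⟩ := exists_seq_tendsto_sSup (hne.image I) (OrderTop.bddAbove _)
  choose f hfS hf using huS
  have hsS := hiInf f hfS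
  refine ⟨⨅ n, f n, hsS, fun g hg => ?_⟩
  set s := ⨅ n, f n
  have hsI : sSup (I '' S) ≤ I s := by
    refine le_of_tendsto' hu fun n => ?_
    rw [← hf n]
    exact lintegral_mono fun ω => strictAnti_invOneAddExp.antitone (iInf_le f n ω)
  have hfin : I s ≠ ⊤ := by
    refine ((lintegral_mono fun ω => invOneAddExp_le_one (s ω)).trans_lt ?_).ne
    simp
  have heq := ae_eq_of_ae_le_of_lintegral_le (μ := μ)
    (f := fun ω => invOneAddExp (s ω)) (g := fun ω => invOneAddExp ((s ⊓ g) ω))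
    (Eventually.of_forall fun ω => strictAnti_invOneAddExp.antitone inf_le_left) hfin
    (measurable_invOneAddExp.comp (hmeas _ (hinf s hsS g hg))).aemeasurable
    ((le_sSup (mem_image_of_mem I (hinf s hsS g hg))).trans hsI)
  filter_upwards [heq] with ω hω
  exact inf_eq_left.1 (strictAnti_invOneAddExp.injective hω).symm

/-- Theorem: for every nonempty family `Ξ` of real-valued random variables there exists an
`H`-conditional essential supremum, unique up to a.s. equality. -/
theorem stmt_18 {Ω : Type*} [F : MeasurableSpace Ω]
    (μ : Measure Ω) [IsProbabilityMeasure μ]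
    (H : MeasurableSpace Ω) (hHF : H ≤ F)
    (Ξ : Set (Ω → ℝ)) (hne : Ξ.Nonempty) (hmeas : ∀ ξ ∈ Ξ, Measurable[F] ξ) :
    ∃ s : Ω → EReal, IsCondEssSup μ H Ξ s ∧
      ∀ s' : Ω → EReal, IsCondEssSup μ H Ξ s' → s' =ᵐ[μ] s := by
  let S : Set (Ω → EReal) :=
    {η | Measurable[H] η ∧ ∀ ξ ∈ Ξ, ∀ᵐ ω ∂μ, (ξ ω : EReal) ≤ η ω}
  obtain ⟨s, ⟨hsm, hs⟩, hleast⟩ : ∃ s ∈ S, ∀ f ∈ S, s ≤ᵐ[μ] f := by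
    refine exists_ae_least_of_iInf_mem μ ⟨fun _ => ⊤, measurable_const, by simp⟩
      (fun f hf => hf.1.mono hHF le_rfl) (fun f hf g hg => ⟨hf.1.inf hg.1, fun ξ hξ => ?_⟩)
      (fun f hf => ⟨?_, fun ξ hξ => ?_⟩)
    · filter_upwards [hf.2 ξ hξ, hg.2 ξ hξ] with ω h₁ h₂ using le_inf h₁ h₂
    · rw [show (⨅ n, f n) = fun ω => ⨅ n, f n ω from funext fun ω => iInf_apply]
      exact Measurable.iInf fun n => (hf n).1
    · filter_upwards [ae_all_iff.2 fun n => (hf n).2 ξ hξ] with ω hω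
      rw [iInf_apply]
      exact le_iInf hω
  have hbot : ∀ᵐ ω ∂μ, s ω ≠ ⊥ := by
    obtain ⟨ξ, hξ⟩ := hne
    filter_upwards [hs ξ hξ] with ω hω using ((EReal.bot_lt_coe _).trans_le hω).ne'
  refine ⟨s, ⟨hsm, hbot, hs, fun η hη _ hdom => hleast η ⟨hη, hdom⟩⟩, ?_⟩
  rintro s' ⟨hm', -, hdom', hleast'⟩
  exact EventuallyLE.antisymm (hleast' s hsm hbot hs) (hleast s' ⟨hm', hdom'⟩)
end
end
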